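/- arXiv:1903.03197 — 2 statements merged into one kernel-verified Lean document; each statement's English description precedes it below -/
import Mathlib

section
/- Let G be a reduced well-indumatched unicyclic graph of girth g ≥ 10, not isomorphic to the cycle C_11, with unique cycle C = v1 v2 ... vg v1, such that for every i the rooted tree T_{v_i} is of Type (i) or of Type (ii). Then for every i (indices modulo g), exactly one of T_{v_i} and T_{v_{i+1}} is of Type (i) and the other is of Type (ii); in particular g is even and every maximal induced matching of G has size g/2. -/
open SimpleGraph

/-- `M` is an induced matching of `G`: a set of edges of `G` such that no two distinct
edges of `M` share an endpoint or have endpoints joined by an edge of `G`. -/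
def IsInducedMatching {V : Type*} (G : SimpleGraph V) (M : Set (Sym2 V)) : Prop :=
  M ⊆ G.edgeSet ∧
    ∀ e ∈ M, ∀ f ∈ M, e ≠ f → ∀ u ∈ e, ∀ v ∈ f, u ≠ v ∧ ¬ G.Adj u v

/-- `M` is a maximal induced matching of `G`. -/
def IsMaximalInducedMatching {V : Type*} (G : SimpleGraph V) (M : Set (Sym2 V)) : Prop :=
  IsInducedMatching G M ∧
    ∀ N : Set (Sym2 V), IsInducedMatching G N → M ⊆ N → N = M

/-- `G` is well-indumatched: all of its maximal induced matchings have the same size. -/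
def WellIndumatched {V : Type*} (G : SimpleGraph V) : Prop :=
  ∀ M N : Set (Sym2 V), IsMaximalInducedMatching G M → IsMaximalInducedMatching G N →
    M.ncard = N.ncard

/-- A graph is reduced if no two distinct vertices have the same open neighborhood. -/
def Reduced {V : Type*} (G : SimpleGraph V) : Prop :=
  ∀ x y : V, G.neighborSet x = G.neighborSet y → x = y

/-- The component of `v` in `H` is of Type (i): it consists of the single vertex `v`. -/
def TypeI {V : Type*} (H : SimpleGraph V) (v : V) : Prop :=
  (H.connectedComponentMk v).supp = {v}

/-- The component of `v` in `H` is of Type (ii): it is a path of length `2` having `v`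
as an endpoint. -/
def TypeII {V : Type*} (H : SimpleGraph V) (v : V) : Prop :=
  ∃ x y : V, x ≠ y ∧ v ≠ x ∧ v ≠ y ∧
    (H.connectedComponentMk v).supp = {v, x, y} ∧
    H.Adj v x ∧ H.Adj x y ∧ ¬ H.Adj v y

set_option linter.unusedSimpArgs false

/-- Two edges conflict if they meet or are joined by an edge. -/
def Conf {V : Type*} (G : SimpleGraph V) (e f : Sym2 V) : Prop :=
  ∃ u ∈ e, ∃ v ∈ f, u = v ∨ G.Adj u v

section basics
variable {V : Type*} {G : SimpleGraph V}

lemma conf_mk {a b u w : V} : Conf G s(a, b) s(u, w) ↔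
    (a = u ∨ G.Adj a u) ∨ (a = w ∨ G.Adj a w) ∨ (b = u ∨ G.Adj b u) ∨ (b = w ∨ G.Adj b w) := by
  simp only [Conf, Sym2.mem_iff, exists_eq_or_imp, exists_eq_left]
  tauto

lemma conf_symm {e f : Sym2 V} (h : Conf G e f) : Conf G f e := by
  obtain ⟨u, hu, v, hv, h⟩ := h
  exact ⟨v, hv, u, hu, h.imp Eq.symm fun h => h.symm⟩

lemma conf_comm {e f : Sym2 V} : Conf G e f ↔ Conf G f e := ⟨conf_symm, conf_symm⟩

lemma conf_refl (e : Sym2 V) : Conf G e e := by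
  induction e with | h a b => exact conf_mk.2 (Or.inl (Or.inl rfl))

lemma indMatching_iff {M : Set (Sym2 V)} : IsInducedMatching G M ↔
    M ⊆ G.edgeSet ∧ ∀ e ∈ M, ∀ f ∈ M, e ≠ f → ¬ Conf G e f := by
  unfold IsInducedMatching Conf
  refine and_congr_right fun _ => forall₂_congr fun e _ => forall₂_congr fun f _ => 
    forall_congr' fun _ => ?_
  push Not
  rfl

lemma maximal_of_dominating {M : Set (Sym2 V)} (hM : IsInducedMatching G M)
    (hd : ∀ f ∈ G.edgeSet, ∃ e ∈ M, Conf G e f) : IsMaximalInducedMatching G M := by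
  refine ⟨hM, fun N hN hMN => Set.Subset.antisymm ?_ hMN⟩
  intro f hf
  rw [indMatching_iff] at hN
  obtain ⟨e, he, hc⟩ := hd f (hN.1 hf)
  by_contra hfM
  exact hN.2 e (hMN he) f hf (fun h => hfM (h ▸ he)) hc

lemma exists_maximal_ext [Finite V] {M : Set (Sym2 V)} (hM : IsInducedMatching G M) :
    ∃ N, M ⊆ N ∧ IsMaximalInducedMatching G N := by
  obtain ⟨N, hMN, hN⟩ := Set.Finite.exists_le_maximal
    (Set.toFinite {N : Set (Sym2 V) | IsInducedMatching G N}) hM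
  exact ⟨N, hMN, hN.1, fun K hK hNK => Set.Subset.antisymm (hN.2 hK hNK) hNK⟩

lemma exchange [Finite V] (hW : WellIndumatched G) (A B : List (Sym2 V))
    (hA : ∀ e ∈ A, e ∈ G.edgeSet) (hB : ∀ e ∈ B, e ∈ G.edgeSet)
    (hAi : A.Pairwise fun e f => ¬ Conf G e f) (hBi : B.Pairwise fun e f => ¬ Conf G e f)
    (hcov : ∀ f ∈ G.edgeSet, ∀ b ∈ B, Conf G b f → ∃ a ∈ A, Conf G a f) :
    B.length ≤ A.length := by
  classical
  have key : ∀ L : List (Sym2 V), (L.Pairwise fun e f => ¬ Conf G e f) →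
      ∀ e ∈ L, ∀ f ∈ L, e ≠ f → ¬ Conf G e f := by
    intro L hL e he f hf hef
    have : Std.Symm (fun e f => ¬ Conf G e f) := ⟨fun _ _ h h' => h (conf_symm h')⟩
    exact hL.forall he hf hef
  have hAm : IsInducedMatching G {e | e ∈ A} := indMatching_iff.2 ⟨hA, key A hAi⟩
  obtain ⟨I, hAI, hI⟩ := exists_maximal_ext hAm
  have hIi := indMatching_iff.1 hI.1
  have hno : ∀ f ∈ I \ {e | e ∈ A}, ∀ b ∈ B, ¬ Conf G b f := by
    intro f hf b hb hc
    obtain ⟨a, ha, hc'⟩ := hcov f (hIi.1 hf.1) b hb hc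
    exact hIi.2 a (hAI ha) f hf.1 (fun h => hf.2 (h ▸ ha)) hc'
  have hJ : IsInducedMatching G ((I \ {e | e ∈ A}) ∪ {e | e ∈ B}) := by
    rw [indMatching_iff]
    refine ⟨Set.union_subset (fun f hf => hIi.1 hf.1) hB, ?_⟩
    rintro e (he | he) f (hf | hf) hef
    · exact hIi.2 e he.1 f hf.1 hef
    · exact fun h => hno e he f hf (conf_symm h)
    · exact hno f hf e he
    · exact key B hBi e he f hf hef
  obtain ⟨J, hJJ, hJm⟩ := exists_maximal_ext hJ
  have h1 := hW I J hI hJm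
  have h2 := Set.ncard_le_ncard hJJ (Set.toFinite _)
  rw [Set.ncard_union_eq] at h2
  · have h3 := Set.ncard_sdiff_add_ncard_of_subset hAI
    have h4 : {e | e ∈ A}.ncard ≤ A.length := by
      have : {e | e ∈ A} = (A.toFinset : Set (Sym2 V)) := by ext; simp
      rw [this, Set.ncard_coe_finset]; exact A.toFinset_card_le
    have h5 : {e | e ∈ B}.ncard = B.length := by
      have : {e | e ∈ B} = (B.toFinset : Set (Sym2 V)) := by ext; simp
      rw [this, Set.ncard_coe_finset]
      exact List.toFinset_card_of_nodup (hBi.imp fun {a b} h (h' : a = b) => h (by rw [h']; exact conf_refl _))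
    omega
  · rw [Set.disjoint_left]
    exact fun e he hb => hno e he e hb (conf_refl e)
end basics

/-- The coordinates of a cycle with pendant paths of length two at the positions in `S`. -/
structure Frame {V : Type*} (G : SimpleGraph V) (g : ℕ) (S : Set (ZMod g))
    (c x y : ZMod g → V) : Prop where
  cc : ∀ i j, G.Adj (c i) (c j) ↔ j = i + 1 ∨ i = j + 1
  cinj : ∀ i j, c i = c j → i = j
  cx : ∀ i, ∀ j ∈ S, G.Adj (c i) (x j) ↔ i = j
  cy : ∀ i, ∀ j ∈ S, ¬ G.Adj (c i) (y j)
  xy : ∀ i ∈ S, ∀ j ∈ S, G.Adj (x i) (y j) ↔ i = j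
  xx : ∀ i ∈ S, ∀ j ∈ S, ¬ G.Adj (x i) (x j)
  yy : ∀ i ∈ S, ∀ j ∈ S, ¬ G.Adj (y i) (y j)
  ncx : ∀ i, ∀ j ∈ S, c i ≠ x j
  ncy : ∀ i, ∀ j ∈ S, c i ≠ y j
  nxy : ∀ i ∈ S, ∀ j ∈ S, x i ≠ y j
  xinj : ∀ i ∈ S, ∀ j ∈ S, x i = x j → i = j
  yinj : ∀ i ∈ S, ∀ j ∈ S, y i = y j → i = j
  verts : ∀ u, ∃ i, u = c i ∨ i ∈ S ∧ (u = x i ∨ u = y i)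

namespace Frame
variable {V : Type*} {G : SimpleGraph V} {g : ℕ} {S : Set (ZMod g)} {c x y : ZMod g → V}

lemma edges (F : Frame G g S c x y) : ∀ f ∈ G.edgeSet, (∃ i, f = s(c i, c (i + 1))) ∨
    (∃ i ∈ S, f = s(c i, x i)) ∨ (∃ i ∈ S, f = s(x i, y i)) := by
  intro f
  induction f with | h u w =>
  intro h
  rw [mem_edgeSet] at h
  obtain ⟨i, rfl | ⟨hi, rfl | rfl⟩⟩ := F.verts u <;>
  obtain ⟨j, rfl | ⟨hj, rfl | rfl⟩⟩ := F.verts w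
  · rcases (F.cc _ _).1 h with rfl | rfl
    · exact Or.inl ⟨_, rfl⟩
    · exact Or.inl ⟨_, Sym2.eq_swap⟩
  · obtain rfl := (F.cx _ _ hj).1 h
    exact Or.inr (Or.inl ⟨_, hj, rfl⟩)
  · exact absurd h (F.cy _ _ hj)
  · obtain rfl := (F.cx _ _ hi).1 h.symm
    exact Or.inr (Or.inl ⟨_, hi, Sym2.eq_swap⟩)
  · exact absurd h (F.xx _ hi _ hj)
  · obtain rfl := (F.xy _ hi _ hj).1 h
    exact Or.inr (Or.inr ⟨_, hi, rfl⟩)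
  · exact absurd h.symm (F.cy _ _ hi)
  · obtain rfl := (F.xy _ hj _ hi).1 h.symm
    exact Or.inr (Or.inr ⟨_, hi, Sym2.eq_swap⟩)
  · exact absurd h (F.yy _ hi _ hj)

lemma ceq (F : Frame G g S c x y) (i j) : c i = c j ↔ i = j := ⟨F.cinj i j, fun h => h ▸ rfl⟩

lemma conf_ee (F : Frame G g S c x y) (i j : ZMod g) :
    Conf G s(c i, c (i + 1)) s(c j, c (j + 1)) ↔
      j = i - 2 ∨ j = i - 1 ∨ j = i ∨ j = i + 1 ∨ j = i + 2 := by
  rw [conf_mk]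
  simp only [F.cc, F.ceq]
  grind

lemma conf_ep (F : Frame G g S c x y) (i j : ZMod g) (hj : j ∈ S) :
    Conf G s(c i, c (i + 1)) s(c j, x j) ↔
      j = i - 1 ∨ j = i ∨ j = i + 1 ∨ j = i + 2 := by
  rw [conf_mk]
  have := F.ncx
  have := F.cx
  simp only [F.cc, F.ceq]
  grind

lemma conf_eq (F : Frame G g S c x y) (i j : ZMod g) (hj : j ∈ S) :
    Conf G s(c i, c (i + 1)) s(x j, y j) ↔ j = i ∨ j = i + 1 := by
  rw [conf_mk]
  have := F.ncx
  have := F.cx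
  have := F.ncy
  have := F.cy
  grind

lemma conf_qe (F : Frame G g S c x y) (i j : ZMod g) (hj : j ∈ S) :
    Conf G s(x j, y j) s(c i, c (i + 1)) ↔ j = i ∨ j = i + 1 := by
  rw [conf_comm, F.conf_eq _ _ hj]

lemma conf_qp (F : Frame G g S c x y) (i j : ZMod g) (hi : i ∈ S) (hj : j ∈ S) :
    Conf G s(x i, y i) s(c j, x j) ↔ i = j := by
  rw [conf_comm, conf_mk]
  have := F.ncx j i hi
  have := F.cx j i hi
  have := F.ncy j i hi
  have := F.cy j i hi
  have := F.xx j hj i hi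
  have := F.xinj j hj i hi
  have := F.xy j hj i hi
  have := F.nxy j hj i hi
  grind

lemma conf_qq (F : Frame G g S c x y) (i j : ZMod g) (hi : i ∈ S) (hj : j ∈ S) :
    Conf G s(x i, y i) s(x j, y j) ↔ i = j := by
  rw [conf_mk, G.adj_comm (y i) (x j)]
  have := F.xx i hi j hj
  have := F.xinj i hi j hj
  have := F.yy i hi j hj
  have := F.yinj i hi j hj
  have := F.xy i hi j hj
  have := F.xy j hj i hi
  have := F.nxy j hj i hi
  have := F.nxy i hi j hj
  grind

lemma memE (F : Frame G g S c x y) (i : ZMod g) : s(c i, c (i + 1)) ∈ G.edgeSet :=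
  (F.cc _ _).2 (Or.inl rfl)

lemma memQ (F : Frame G g S c x y) (i : ZMod g) (hi : i ∈ S) : s(x i, y i) ∈ G.edgeSet :=
  (F.xy _ hi _ hi).2 rfl

lemma nz (k : ℕ) (h0 : 0 < k) (hk : k < g) : (k : ZMod g) ≠ 0 := by
  rw [Ne, ZMod.natCast_eq_zero_iff]
  exact fun h => absurd (Nat.le_of_dvd h0 h) (by omega)

lemma no_consecutive [Finite V] (F : Frame G g S c x y) (hW : WellIndumatched G) (hg : 10 ≤ g)
    (i : ZMod g) (hi : i ∈ S) (hi' : i + 1 ∈ S) : False := by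
  have n1 := nz (g := g) 1 (by omega) (by omega)
  push_cast at n1
  have := exchange hW [s(c i, c (i + 1))] [s(x i, y i), s(x (i + 1), y (i + 1))]
    (by simpa using F.memE i) (by simpa using ⟨F.memQ i hi, F.memQ _ hi'⟩) (by simp)
    (by simp [F.conf_qq, hi, hi']; grind) (by
      intro f hf b hb
      simp only [List.mem_cons, List.not_mem_nil, or_false, exists_eq_left] at hb ⊢
      rcases F.edges f hf with ⟨j, rfl⟩ | ⟨j, hj, rfl⟩ | ⟨j, hj, rfl⟩ <;>
      rcases hb with rfl | rfl <;>
      (try simp only [F.conf_ee, F.conf_ep, F.conf_eq, F.conf_qe, F.conf_qp, F.conf_qq, hi, hi', hj]) <;>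
      (try simp only [F.conf_ee, F.conf_ep, F.conf_eq, F.conf_qe, F.conf_qp, F.conf_qq, hi, hi']) <;>
      grind)
  simp at this

lemma nconf_ee (F : Frame G g S c x y) (i j : ZMod g) (k : ℕ) (h3 : 3 ≤ k) (hk : k + 3 ≤ g)
    (h : j = i + k) : ¬ Conf G s(c i, c (i + 1)) s(c j, c (j + 1)) := by
  rw [F.conf_ee]
  obtain ⟨m, rfl⟩ := Nat.exists_eq_add_of_le h3
  rintro (h' | h' | h' | h' | h')
  · refine nz (g := g) (3 + m + 2) (by omega) (by omega) ?_
    push_cast at *; linear_combination h' - h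
  · refine nz (g := g) (3 + m + 1) (by omega) (by omega) ?_
    push_cast at *; linear_combination h' - h
  · refine nz (g := g) (3 + m) (by omega) (by omega) ?_
    push_cast at *; linear_combination h' - h
  · refine nz (g := g) (2 + m) (by omega) (by omega) ?_
    push_cast at *; linear_combination h' - h
  · refine nz (g := g) (1 + m) (by omega) (by omega) ?_
    push_cast at *; linear_combination h' - h

lemma nconf_qe (F : Frame G g S c x y) (i j : ZMod g) (k : ℕ) (h3 : 1 ≤ k) (hk : k + 2 ≤ g)
    (hi : i ∈ S) (h : j = i + k) : ¬ Conf G s(x i, y i) s(c j, c (j + 1)) := by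
  rw [F.conf_qe _ _ hi]
  rintro (h' | h')
  · refine nz (g := g) k (by omega) (by omega) ?_
    linear_combination - h' - h
  · refine nz (g := g) (k + 1) (by omega) (by omega) ?_
    push_cast; linear_combination - h' - h

lemma add_two [Finite V] (F : Frame G g S c x y) (hW : WellIndumatched G) (hg : 10 ≤ g)
    (i : ZMod g) (hi : i ∈ S) : i + 2 ∈ S := by
  by_contra hi'
  have hi'' : i + 1 + 1 ∉ S := by rwa [show i + 1 + 1 = i + 2 by ring]
  have := exchange hW [s(c i, c (i + 1)), s(c (i + 4), c (i + 4 + 1))]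
    [s(x i, y i), s(c (i + 1), c (i + 1 + 1)), s(c (i + 4), c (i + 4 + 1))]
    (by simpa using ⟨F.memE i, F.memE _⟩)
    (by simpa using ⟨F.memQ i hi, F.memE (i + 1), F.memE (i + 4)⟩)
    (by
      simp only [List.pairwise_cons, List.forall_mem_cons]
      have := F.nconf_ee i (i + 4) 4 (by omega) (by omega) (by push_cast; ring)
      simp [this])
    (by
      simp only [List.pairwise_cons, List.forall_mem_cons]
      have h1 := F.nconf_qe i (i + 1) 1 (by omega) (by omega) hi (by push_cast; ring)
      have h2 := F.nconf_qe i (i + 4) 4 (by omega) (by omega) hi (by push_cast; ring)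
      have h3 := F.nconf_ee (i + 1) (i + 4) 3 (by omega) (by omega) (by push_cast; ring)
      simp [h1, h2, h3]) (by
      intro f hf b hb
      simp only [List.mem_cons, List.not_mem_nil, or_false, exists_eq_or_imp,
        exists_eq_left] at hb ⊢
      rcases F.edges f hf with ⟨j, rfl⟩ | ⟨j, hj, rfl⟩ | ⟨j, hj, rfl⟩ <;>
      rcases hb with rfl | rfl | rfl <;>
      (try simp only [F.conf_ee, F.conf_ep, F.conf_eq, F.conf_qe, F.conf_qp, F.conf_qq, hi, hj]) <;>
      (try simp only [F.conf_ee, F.conf_ep, F.conf_eq, F.conf_qe, F.conf_qp, F.conf_qq, hi]) <;>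
      grind)
  simp at this

lemma nonempty_or [Finite V] (F : Frame G g S c x y) (hW : WellIndumatched G) (hg : 10 ≤ g)
    (hg' : g ≠ 11) : S.Nonempty := by
  by_contra hS
  rw [Set.not_nonempty_iff_eq_empty] at hS
  have hE : ∀ f ∈ G.edgeSet, ∃ j, f = s(c j, c (j + 1)) := by
    intro f hf
    have := F.edges f hf
    simpa [hS] using this
  rcases eq_or_lt_of_le hg with h10 | h10
  · have z : ((10 : ℕ) : ZMod g) = 0 := by rw [h10]; exact ZMod.natCast_self g
    push_cast at z
    have := exchange hW [s(c 0, c (0 + 1)), s(c 5, c (5 + 1))]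
      [s(c 0, c (0 + 1)), s(c 3, c (3 + 1)), s(c 6, c (6 + 1))]
      (by simp only [List.forall_mem_cons, F.memE]; simp)
      (by simp only [List.forall_mem_cons, F.memE]; simp)
      (by
        simp only [List.pairwise_cons, List.forall_mem_cons]
        refine ⟨⟨?_, by simp⟩, by simp, by simp⟩
        · exact F.nconf_ee 0 5 5 (by omega) (by omega) (by norm_num))
      (by
        simp only [List.pairwise_cons, List.forall_mem_cons]
        refine ⟨⟨?_, ?_, by simp⟩, ⟨?_, by simp⟩, by simp, by simp⟩
        · exact F.nconf_ee 0 3 3 (by omega) (by omega) (by norm_num)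
        · exact F.nconf_ee 0 6 6 (by omega) (by omega) (by norm_num)
        · exact F.nconf_ee 3 6 3 (by omega) (by omega) (by norm_num)) (by
        intro f hf b hb
        simp only [List.mem_cons, List.not_mem_nil, or_false, exists_eq_or_imp,
          exists_eq_left] at hb ⊢
        obtain ⟨j, rfl⟩ := hE f hf
        rcases hb with rfl | rfl | rfl <;> simp only [F.conf_ee] <;> grind)
    simp at this
  · have := exchange hW [s(c 0, c (0 + 1)), s(c 5, c (5 + 1)), s(c 9, c (9 + 1))]
      [s(c 0, c (0 + 1)), s(c 3, c (3 + 1)), s(c 6, c (6 + 1)), s(c 9, c (9 + 1))]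
      (by simp only [List.forall_mem_cons, F.memE]; simp)
      (by simp only [List.forall_mem_cons, F.memE]; simp)
      (by
        simp only [List.pairwise_cons, List.forall_mem_cons]
        refine ⟨⟨?_, ?_, by simp⟩, ⟨?_, by simp⟩, by simp, by simp⟩
        · exact F.nconf_ee 0 5 5 (by omega) (by omega) (by norm_num)
        · exact F.nconf_ee 0 9 9 (by omega) (by omega) (by norm_num)
        · exact F.nconf_ee 5 9 4 (by omega) (by omega) (by norm_num))
      (by
        simp only [List.pairwise_cons, List.forall_mem_cons]
        refine ⟨⟨?_, ?_, ?_, by simp⟩, ⟨?_, ?_, by simp⟩, ⟨?_, by simp⟩, by simp, by simp⟩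
        · exact F.nconf_ee 0 3 3 (by omega) (by omega) (by norm_num)
        · exact F.nconf_ee 0 6 6 (by omega) (by omega) (by norm_num)
        · exact F.nconf_ee 0 9 9 (by omega) (by omega) (by norm_num)
        · exact F.nconf_ee 3 6 3 (by omega) (by omega) (by norm_num)
        · exact F.nconf_ee 3 9 6 (by omega) (by omega) (by norm_num)
        · exact F.nconf_ee 6 9 3 (by omega) (by omega) (by norm_num)) (by
        intro f hf b hb
        simp only [List.mem_cons, List.not_mem_nil, or_false, exists_eq_or_imp,
          exists_eq_left] at hb ⊢
        obtain ⟨j, rfl⟩ := hE f hf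
        rcases hb with rfl | rfl | rfl | rfl <;> simp only [F.conf_ee] <;> grind)
    simp at this

lemma cycle11 {S : Set (ZMod 11)} {c x y : ZMod 11 → V} (F : Frame G 11 S c x y) (hS : ¬ S.Nonempty) :
    Nonempty (G ≃g SimpleGraph.cycleGraph 11) := by
  rw [Set.not_nonempty_iff_eq_empty] at hS
  have hbij : Function.Bijective c := by
    refine ⟨fun i j => F.cinj i j, fun u => ?_⟩
    obtain ⟨i, h | h⟩ := F.verts u
    · exact ⟨i, h.symm⟩
    · simp [hS] at h
  refine ⟨(⟨Equiv.ofBijective c hbij, ?_⟩ : SimpleGraph.cycleGraph 11 ≃g G).symm⟩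
  intro a b
  refine (F.cc a b).trans (Iff.trans ?_ SimpleGraph.cycleGraph_adj.symm)
  have key : ∀ a b : ZMod 11, (b = a + 1 ∨ a = b + 1) ↔ (a - b = 1 ∨ b - a = 1) := by decide
  exact key a b

lemma alternate [Finite V] (F : Frame G g S c x y) (hW : WellIndumatched G) (hg : 10 ≤ g)
    (hn : IsEmpty (G ≃g SimpleGraph.cycleGraph 11)) (i : ZMod g) : i ∈ S ↔ i + 1 ∉ S := by
  have : NeZero g := ⟨by omega⟩
  have hne : S.Nonempty := by
    by_cases h : g = 11
    · subst h
      by_contra hS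
      exact (F.cycle11 hS).elim hn.false
    · exact F.nonempty_or hW hg h
  have step : ∀ i, (i ∈ S ∨ i + 1 ∈ S) → (i + 1 ∈ S ∨ i + 1 + 1 ∈ S) := by
    rintro i (h | h)
    · right
      have := F.add_two hW hg i h
      rwa [show i + 1 + 1 = i + 2 by ring]
    · exact Or.inl h
  obtain ⟨s, hs⟩ := hne
  have all : ∀ n : ℕ, (s + n ∈ S ∨ s + n + 1 ∈ S) := by
    intro n
    induction n with
    | zero => left; simpa using hs
    | succ n ih => simpa [add_assoc] using step _ ih
  have hi := all (i - s).val
  rw [ZMod.natCast_zmod_val, add_sub_cancel] at hi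
  constructor
  · exact fun h h' => F.no_consecutive hW hg i h h'
  · exact fun h => hi.resolve_right h

lemma count (hg : 10 ≤ g) (h : ∀ i : ZMod g, i ∈ S ↔ i + 1 ∉ S) : S.ncard + S.ncard = g := by
  have : NeZero g := ⟨by omega⟩
  have h1 : Set.image (fun i => i + 1) S = Sᶜ := by
    ext j
    simp only [Set.mem_image, Set.mem_compl_iff]
    constructor
    · rintro ⟨i, hi, rfl⟩
      exact (h i).1 hi
    · intro hj
      exact ⟨j - 1, (h _).2 (by simpa using hj), by simp⟩
  have h2 : Sᶜ.ncard = S.ncard := by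
    rw [← h1]; exact Set.ncard_image_of_injective _ (add_left_injective 1)
  have h3 := Set.ncard_add_ncard_compl S
  rw [h2, Nat.card_zmod] at h3
  exact h3

lemma size (F : Frame G g S c x y) (hW : WellIndumatched G)
    (h : ∀ i : ZMod g, i ∈ S ↔ i + 1 ∉ S) (M : Set (Sym2 V)) (hM : IsMaximalInducedMatching G M) :
    M.ncard = S.ncard := by
  have hmax : IsMaximalInducedMatching G (Set.image (fun i => s(x i, y i)) S) := by
    apply maximal_of_dominating
    · rw [indMatching_iff]
      constructor
      · rintro _ ⟨i, hi, rfl⟩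
        exact F.memQ i hi
      · rintro _ ⟨i, hi, rfl⟩ _ ⟨j, hj, rfl⟩ hne hc
        exact hne (by rw [(F.conf_qq i j hi hj).1 hc])
    · intro f hf
      rcases F.edges f hf with ⟨j, rfl⟩ | ⟨j, hj, rfl⟩ | ⟨j, hj, rfl⟩
      · by_cases hj : j ∈ S
        · exact ⟨_, ⟨j, hj, rfl⟩, (F.conf_qe _ _ hj).2 (Or.inl rfl)⟩
        · have hj' : j + 1 ∈ S := by
            by_contra h'
            exact hj ((h j).2 h')
          exact ⟨_, ⟨j + 1, hj', rfl⟩, (F.conf_qe _ _ hj').2 (Or.inr rfl)⟩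
      · exact ⟨_, ⟨j, hj, rfl⟩, (F.conf_qp _ _ hj hj).2 rfl⟩
      · exact ⟨_, ⟨j, hj, rfl⟩, (F.conf_qq _ _ hj hj).2 rfl⟩
  rw [hW _ _ hM hmax]
  apply Set.InjOn.ncard_image
  intro i hi j hj hij
  refine (F.conf_qq i j hi hj).1 ?_
  have hij : s(x i, y i) = s(x j, y j) := hij
  rw [hij]
  exact conf_refl _

end Frame

lemma exists_frame {V : Type*} (G : SimpleGraph V) (g : ℕ) (hg : 10 ≤ g)
    (hconn : G.Connected)
    (v : V) (C : G.Walk v v) (hC : C.IsCycle) (hlen : C.length = g)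
    (huniq : ∀ (w : V) (D : G.Walk w w), D.IsCycle → ∀ e, e ∈ D.edges ↔ e ∈ C.edges)
    (htypes : ∀ w ∈ C.support,
      TypeI (G.deleteEdges {e | e ∈ C.edges}) w ∨
        TypeII (G.deleteEdges {e | e ∈ C.edges}) w) :
    ∃ c x y : ZMod g → V, (∀ n ≤ g, C.getVert n = c n) ∧
      Frame G g {i | TypeII (G.deleteEdges {e | e ∈ C.edges}) (c i)} c x y := by
  classical
  have : NeZero g := ⟨by omega⟩
  have : Nonempty V := ⟨v⟩
  obtain ⟨c, hc⟩ : ∃ c : ZMod g → V, ∀ i, c i = C.getVert i.val := ⟨_, fun _ => rfl⟩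
  have hcn : ∀ n ≤ g, C.getVert n = c n := by
    intro n hn
    rw [hc]
    rcases hn.lt_or_eq with h | rfl
    · rw [ZMod.val_natCast_of_lt h]
    · rw [ZMod.natCast_self, ZMod.val_zero, C.getVert_zero, ← hlen, C.getVert_length]
  have cinj : ∀ i j, c i = c j → i = j := by
    intro i j h
    rw [hc, hc] at h
    have h1 := ZMod.val_lt i
    have h2 := ZMod.val_lt j
    exact ZMod.val_injective g (hC.getVert_injOn' (by simp; omega) (by simp; omega) h)
  have hsup : ∀ i, c i ∈ C.support := fun i => by rw [hc]; exact C.getVert_mem_support _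
  have hsup' : ∀ u ∈ C.support, ∃ i, u = c i := by
    intro u hu
    obtain ⟨n, hn, hn'⟩ := Walk.mem_support_iff_exists_getVert.1 hu
    exact ⟨n, by rw [← hcn n (by omega), hn]⟩
  have hadj : ∀ i, G.Adj (c i) (c (i + 1)) := by
    intro i
    have h1 := ZMod.val_lt i
    have h2 := C.adj_getVert_succ (i := i.val) (by omega)
    rw [hcn _ (by omega), hcn _ (by omega)] at h2
    simpa using h2
  have hedge : ∀ a b, s(a, b) ∈ C.edges →
      ∃ i, (a = c i ∧ b = c (i + 1)) ∨ (b = c i ∧ a = c (i + 1)) := by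
    intro a b h
    obtain ⟨n, hn, h⟩ := List.mem_iff_getElem.1 h
    rw [Walk.length_edges] at hn
    rw [Walk.getElem_edges, hcn _ (by omega), hcn _ (by omega)] at h
    refine ⟨n, ?_⟩
    push_cast at h
    rcases Sym2.eq_iff.1 h with h | h
    · exact Or.inl ⟨h.1.symm, h.2.symm⟩
    · exact Or.inr ⟨h.1.symm, h.2.symm⟩
  set H := G.deleteEdges {e | e ∈ C.edges} with hH
  have hHadj : ∀ a b, H.Adj a b ↔ G.Adj a b ∧ s(a, b) ∉ C.edges := by
    intro a b; rw [hH, deleteEdges_adj]; rfl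
  -- edges outside the cycle are bridges
  have hbr : ∀ a b, H.Adj a b → ¬ (G.deleteEdges {s(a, b)}).Reachable a b := by
    intro a b h
    rw [hHadj] at h
    rw [← isBridge_iff, isBridge_iff_forall_cycle_notMem h.1]
    intro w D hD hmem
    exact h.2 ((huniq w D hD _).1 hmem)
  have hreach : ∀ e, e ∉ C.edges → ∀ i j, (G.deleteEdges {e}).Reachable (c i) (c j) := by
    intro e he i j
    have h0 : ∀ i, (G.deleteEdges {e}).Reachable v (c i) := by
      intro i
      refine ⟨(C.takeUntil (c i) (hsup i)).toDeleteEdges _ ?_⟩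
      intro f hf hfe
      rw [Set.mem_singleton_iff] at hfe
      exact he (hfe ▸ C.edges_takeUntil_subset_edges _ hf)
    exact (h0 i).symm.trans (h0 j)
  have hcomp : ∀ i u, H.Reachable (c i) u ↔ u ∈ (H.connectedComponentMk (c i)).supp := by
    intro i u
    rw [ConnectedComponent.mem_supp_iff, ConnectedComponent.eq]
    exact reachable_comm
  have hsep : ∀ i j, H.Reachable (c i) (c j) → i = j := by
    intro i j h
    rw [hcomp] at h
    rcases htypes (c i) (hsup i) with ht | ⟨x, y, hne', hx, hy, ht, a1, a2, a3⟩
    · rw [ht] at h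
      exact (cinj _ _ h).symm
    · rw [ht] at h
      rcases h with h | h | h
      · exact (cinj _ _ h).symm
      · exfalso
        refine hbr _ _ a1 ?_
        have := hreach _ ((hHadj _ _).1 a1).2 i j
        rwa [h] at this
      · exfalso
        rw [Set.mem_singleton_iff] at h
        refine hbr _ _ a1 ?_
        have h1 := hreach _ ((hHadj _ _).1 a1).2 i j
        refine h1.trans ?_
        rw [h]
        apply Adj.reachable
        rw [deleteEdges_adj]
        refine ⟨((hHadj _ _).1 a2).1.symm, ?_⟩
        rw [Set.mem_singleton_iff, Sym2.eq_iff]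
        rintro (h | h)
        · exact hy h.1.symm
        · exact hne' h.1.symm
  choose! x y hne hx hy hs a1 a2 a3 using
    (fun i (hi : i ∈ {i | TypeII H (c i)}) => (hi : TypeII H (c i)))
  set S := {i | TypeII H (c i)} with hS
  have rx : ∀ i ∈ S, H.Reachable (c i) (x i) := fun i hi => (a1 i hi).reachable
  have ry : ∀ i ∈ S, H.Reachable (c i) (y i) := fun i hi => (rx i hi).trans (a2 i hi).reachable
  have hlab : ∀ i j u, H.Reachable (c i) u → H.Reachable (c j) u → i = j :=
    fun i j u h h' => hsep i j (h.trans h'.symm)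
  have ncx : ∀ i, ∀ j ∈ S, c i ≠ x j := by
    intro i j hj h
    have : i = j := hlab i j (c i) (Reachable.refl _) (h ▸ rx j hj)
    subst this
    exact hx i hj h
  have ncy : ∀ i, ∀ j ∈ S, c i ≠ y j := by
    intro i j hj h
    have : i = j := hlab i j (c i) (Reachable.refl _) (h ▸ ry j hj)
    subst this
    exact hy i hj h
  have toH : ∀ a b, G.Adj a b → (∀ k, c k ≠ b) → H.Adj a b := by
    intro a b h hb
    refine (hHadj _ _).2 ⟨h, fun he => ?_⟩
    obtain ⟨i, h | h⟩ := hedge a b he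
    · exact hb _ h.2.symm
    · exact hb _ h.1.symm
  have htr : ∀ i j a b, H.Reachable (c i) a → H.Reachable (c j) b → H.Adj a b → i = j :=
    fun i j a b h1 h2 h => hlab i j b (h1.trans h.reachable) h2
  have hcov : ∀ u, ∃ i, H.Reachable (c i) u := by
    have main : ∀ a b (p : G.Walk a b), (∃ i, H.Reachable (c i) a) → ∃ i, H.Reachable (c i) b := by
      intro a b p
      induction p with
      | nil => exact id
      | cons h p ih =>
        rename_i a b d
        rintro ⟨i, hi⟩
        apply ih
        by_cases he : s(a, b) ∈ C.edges
        · obtain ⟨j, h | h⟩ := hedge a b he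
          · exact ⟨_, by rw [h.2]⟩
          · exact ⟨_, by rw [h.1]⟩
        · exact ⟨i, hi.trans ((hHadj _ _).2 ⟨h, he⟩).reachable⟩
    intro u
    obtain ⟨p⟩ := hconn.preconnected (c 0) u
    exact main _ _ p ⟨0, Reachable.refl _⟩
  refine ⟨c, x, y, hcn, ?_⟩
  refine { cc := ?_, cinj := cinj, cx := ?_, cy := ?_, xy := ?_, xx := ?_, yy := ?_, ncx := ncx,
           ncy := ncy, nxy := ?_, xinj := ?_, yinj := ?_, verts := ?_ }
  · intro i j
    constructor
    · intro h
      by_cases he : s(c i, c j) ∈ C.edges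
      · obtain ⟨k, h | h⟩ := hedge _ _ he
        · left; rw [cinj _ _ h.1, cinj _ _ h.2]
        · right; rw [cinj _ _ h.1, cinj _ _ h.2]
      · have := hsep i j ((hHadj _ _).2 ⟨h, he⟩).reachable
        subst this
        exact absurd h (G.irrefl)
    · rintro (rfl | rfl)
      · exact hadj _
      · exact (hadj _).symm
  · intro i j hj
    constructor
    · intro h
      exact htr i j _ _ (Reachable.refl _) (rx j hj) (toH _ _ h fun k => ncx k j hj)
    · rintro rfl
      exact ((hHadj _ _).1 (a1 i hj)).1
  · intro i j hj h
    have h := toH _ _ h fun k => ncy k j hj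
    have := htr i j _ _ (Reachable.refl _) (ry j hj) h
    subst this
    exact a3 i hj h
  · intro i hi j hj
    constructor
    · intro h
      exact htr i j _ _ (rx i hi) (ry j hj) (toH _ _ h fun k => ncy k j hj)
    · rintro rfl
      exact ((hHadj _ _).1 (a2 i hj)).1
  · intro i hi j hj h
    have := htr i j _ _ (rx i hi) (rx j hj) (toH _ _ h fun k => ncx k j hj)
    subst this
    exact G.irrefl h
  · intro i hi j hj h
    have := htr i j _ _ (ry i hi) (ry j hj) (toH _ _ h fun k => ncy k j hj)
    subst this
    exact G.irrefl h
  · intro i hi j hj h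
    have := hlab i j _ (rx i hi) (h ▸ ry j hj)
    subst this
    exact hne i hi h
  · intro i hi j hj h
    exact hlab i j _ (rx i hi) (h ▸ rx j hj)
  · intro i hi j hj h
    exact hlab i j _ (ry i hi) (h ▸ ry j hj)
  · intro u
    obtain ⟨i, hi⟩ := hcov u
    refine ⟨i, ?_⟩
    by_cases hiS : i ∈ S
    · rw [hcomp, hs i hiS] at hi
      rcases hi with h | h | h
      · exact Or.inl h
      · exact Or.inr ⟨hiS, Or.inl h⟩
      · exact Or.inr ⟨hiS, Or.inr h⟩
    · rw [hcomp, (htypes _ (hsup i)).resolve_right hiS] at hi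
      exact Or.inl hi

/-- Let `G ≠ C₁₁` be a reduced well-indumatched unicyclic graph of girth `g ≥ 10` with
unique cycle `C = v₁ ⋯ v_g v₁`, all of whose rooted trees `T_{v_i}` are of Type (i) or
Type (ii). Then the trees `T_{v_i}` and `T_{v_{i+1}}` are alternately of Type (i) and
Type (ii); in particular `g` is even and every maximal induced matching of `G` has size
`g / 2`. -/
theorem stmt_14 {V : Type*} [Fintype V] (G : SimpleGraph V) (g : ℕ) (hg : 10 ≤ g)
    (hred : Reduced G) (hWIM : WellIndumatched G) (hconn : G.Connected)
    (hgirth : G.girth = g) (hnot11 : IsEmpty (G ≃g SimpleGraph.cycleGraph 11))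
    (v : V) (C : G.Walk v v) (hC : C.IsCycle) (hlen : C.length = g)
    (huniq : ∀ (w : V) (D : G.Walk w w), D.IsCycle → ∀ e, e ∈ D.edges ↔ e ∈ C.edges)
    (htypes : ∀ w ∈ C.support,
      TypeI (G.deleteEdges {e | e ∈ C.edges}) w ∨
        TypeII (G.deleteEdges {e | e ∈ C.edges}) w) :
    (∀ i < g,
      (TypeI (G.deleteEdges {e | e ∈ C.edges}) (C.getVert i) ∧
        TypeII (G.deleteEdges {e | e ∈ C.edges}) (C.getVert (i + 1))) ∨
      (TypeII (G.deleteEdges {e | e ∈ C.edges}) (C.getVert i) ∧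
        TypeI (G.deleteEdges {e | e ∈ C.edges}) (C.getVert (i + 1)))) ∧
    Even g ∧
    ∀ M : Set (Sym2 V), IsMaximalInducedMatching G M → M.ncard = g / 2 := by
  obtain ⟨c, x, y, hcn, F⟩ := exists_frame G g hg hconn v C hC hlen huniq htypes
  have halt := F.alternate hWIM hg hnot11
  have hcount := Frame.count hg halt
  refine ⟨?_, ⟨_, hcount.symm⟩, ?_⟩
  · intro i hi
    have e1 := hcn i hi.le
    have e2 := hcn (i + 1) hi
    have h := halt (i : ZMod g)
    rw [← Nat.cast_succ, Nat.succ_eq_add_one, Set.mem_ofPred_eq, Set.mem_ofPred_eq, ← e1, ← e2] at h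
    have t1 := htypes _ (C.getVert_mem_support i)
    have t2 := htypes _ (C.getVert_mem_support (i + 1))
    tauto
  · intro M hM
    rw [F.size hWIM halt M hM]
    omega
end

section
/- A graph G is a minimal well-indumatched graph of girth at least 9 (i.e., G is well-indumatched of girth at least 9 and no proper subgraph of G is well-indumatched of girth at least 9) if and only if either G is the cycle C_11, or G is a reduced unicyclic graph of even girth g ≥ 10 with unique cycle C = v1 v2 ... vg v1 such that the rooted trees T_{v_i} are alternately of Type (i) and of Type (ii) around the cycle. -/
open SimpleGraph

lemma Conf.symm {V : Type*} {G : SimpleGraph V} {e f : Sym2 V} (h : Conf G e f) :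
    Conf G f e := by
  obtain ⟨u, hu, v, hv, h⟩ := h
  exact ⟨v, hv, u, hu, h.imp Eq.symm SimpleGraph.Adj.symm⟩

lemma Conf.refl {V : Type*} {G : SimpleGraph V} (e : Sym2 V) : Conf G e e := by
  induction e with
  | _ a b => exact ⟨a, by simp, a, by simp, Or.inl rfl⟩

lemma isIM_iff {V : Type*} {G : SimpleGraph V} {M : Set (Sym2 V)} :
    IsInducedMatching G M ↔ M ⊆ G.edgeSet ∧ ∀ e ∈ M, ∀ f ∈ M, Conf G e f → e = f := by
  unfold IsInducedMatching Conf
  refine and_congr Iff.rfl ⟨fun h e he f hf ⟨u, hu, v, hv, h'⟩ => ?_,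
    fun h e he f hf hne u hu v hv => ?_⟩
  · by_contra hne
    have := h e he f hf hne u hu v hv
    tauto
  · by_contra hc
    apply hne
    apply h e he f hf ⟨u, hu, v, hv, by tauto⟩

lemma isMIM_iff {V : Type*} {G : SimpleGraph V} {M : Set (Sym2 V)} :
    IsMaximalInducedMatching G M ↔ IsInducedMatching G M ∧
      ∀ e ∈ G.edgeSet, ∃ f ∈ M, Conf G e f := by
  constructor
  · rintro ⟨h, hmax⟩
    refine ⟨h, fun e he => ?_⟩
    by_contra! hc
    have h2 := isIM_iff.1 h
    have : insert e M = M := by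
      apply hmax _ _ (Set.subset_insert _ _)
      rw [isIM_iff]
      refine ⟨Set.insert_subset he h2.1, ?_⟩
      rintro a (rfl | ha) b (rfl | hb) hab
      · rfl
      · exact absurd hab (hc b hb)
      · exact absurd hab.symm (hc a ha)
      · exact h2.2 a ha b hb hab
    have he : e ∈ M := by rw [← this]; simp
    exact hc e he (Conf.refl e)
  · rintro ⟨h, hmax⟩
    refine ⟨h, fun N hN hMN => ?_⟩
    apply Set.Subset.antisymm _ hMN
    intro e he
    have hN2 := isIM_iff.1 hN
    obtain ⟨f, hf, hc⟩ := hmax e (hN2.1 he)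
    rw [hN2.2 e he f (hMN hf) hc]
    exact hf

lemma exists_maximal_IM {V : Type*} [Finite V] {G : SimpleGraph V} {M : Set (Sym2 V)}
    (h : IsInducedMatching G M) : ∃ N, M ⊆ N ∧ IsMaximalInducedMatching G N := by
  obtain ⟨N, hMN, hN⟩ := Finite.exists_le_maximal (p := IsInducedMatching G) h
  exact ⟨N, hMN, hN.1, fun K hK hNK => Set.Subset.antisymm (hN.2 hK hNK) hNK⟩

/-- Exchange lemma. -/
lemma exchange_s15 {V : Type*} [Finite V] {G : SimpleGraph V} (hG : WellIndumatched G)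
    {P Q : Set (Sym2 V)} (hP : IsInducedMatching G P) (hQ : IsInducedMatching G Q)
    (hlt : P.ncard < Q.ncard)
    (hk : ∀ e ∈ G.edgeSet, ∀ q ∈ Q, Conf G e q → ∃ p ∈ P, Conf G e p) : False := by
  obtain ⟨M, hPM, hM⟩ := exists_maximal_IM hP
  have hM2 := isIM_iff.1 hM.1
  have hQ2 := isIM_iff.1 hQ
  have key : ∀ s ∈ M \ P, ∀ q ∈ Q, ¬ Conf G s q := by
    rintro s ⟨hs, hsP⟩ q hq hc
    obtain ⟨p, hp, hc'⟩ := hk s (hM2.1 hs) q hq hc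
    exact hsP (hM2.2 s hs p (hPM hp) hc' ▸ hp)
  have hU : IsInducedMatching G (Q ∪ (M \ P)) := by
    rw [isIM_iff]
    refine ⟨Set.union_subset hQ2.1 (Set.sdiff_subset.trans hM2.1), ?_⟩
    rintro a (ha | ha) b (hb | hb) hab
    · exact hQ2.2 a ha b hb hab
    · exact absurd hab.symm (key b hb a ha)
    · exact absurd hab (key a ha b hb)
    · exact hM2.2 a ha.1 b hb.1 hab
  obtain ⟨N, hUN, hN⟩ := exists_maximal_IM hU
  have h1 : (Q ∪ (M \ P)).ncard = Q.ncard + (M \ P).ncard := by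
    refine Set.ncard_union_eq ?_ (Set.toFinite _) (Set.toFinite _)
    rw [Set.disjoint_left]
    intro a ha hb
    exact key a hb a ha (Conf.refl a)
  have h2 : (M \ P).ncard + P.ncard = M.ncard := Set.ncard_sdiff_add_ncard_of_subset hPM
  have h3 : (Q ∪ (M \ P)).ncard ≤ N.ncard := Set.ncard_le_ncard hUN
  have h4 := hG M N hM hN
  omega

/-- The special form of the exchange lemma that we use. -/
lemma exchange1 {V : Type*} [Finite V] {G : SimpleGraph V} (hG : WellIndumatched G)
    {p q₁ q₂ : Sym2 V} {R : Set (Sym2 V)} (hp : p ∈ G.edgeSet) (hq₁ : q₁ ∈ G.edgeSet)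
    (hq₂ : q₂ ∈ G.edgeSet) (hR : IsInducedMatching G R) (hpR : ∀ r ∈ R, ¬ Conf G p r)
    (h1R : ∀ r ∈ R, ¬ Conf G q₁ r) (h2R : ∀ r ∈ R, ¬ Conf G q₂ r) (h12 : ¬ Conf G q₁ q₂)
    (hk₁ : ∀ e ∈ G.edgeSet, Conf G e q₁ → Conf G e p ∨ ∃ r ∈ R, Conf G e r)
    (hk₂ : ∀ e ∈ G.edgeSet, Conf G e q₂ → Conf G e p ∨ ∃ r ∈ R, Conf G e r) : False := by
  have hR2 := isIM_iff.1 hR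
  have hP : IsInducedMatching G (insert p R) := by
    rw [isIM_iff]
    refine ⟨Set.insert_subset hp hR2.1, ?_⟩
    rintro a (rfl | ha) b (rfl | hb) hab
    · rfl
    · exact absurd hab (hpR b hb)
    · exact absurd hab.symm (hpR a ha)
    · exact hR2.2 a ha b hb hab
  have hQ : IsInducedMatching G (insert q₁ (insert q₂ R)) := by
    rw [isIM_iff]
    refine ⟨Set.insert_subset hq₁ (Set.insert_subset hq₂ hR2.1), ?_⟩
    rintro a (rfl | rfl | ha) b (rfl | rfl | hb) hab
    · rfl
    · exact absurd hab h12
    · exact absurd hab (h1R b hb)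
    · exact absurd hab.symm h12
    · rfl
    · exact absurd hab (h2R b hb)
    · exact absurd hab.symm (h1R a ha)
    · exact absurd hab.symm (h2R a ha)
    · exact hR2.2 a ha b hb hab
  apply exchange_s15 hG hP hQ
  · rw [Set.ncard_insert_of_notMem, Set.ncard_insert_of_notMem, Set.ncard_insert_of_notMem]
    · omega
    · exact fun h => h2R _ h (Conf.refl _)
    · rintro (h | h)
      · exact h12 (h ▸ Conf.refl _)
      · exact h1R _ h (Conf.refl _)
    · exact fun h => hpR _ h (Conf.refl _)
  · rintro e he q (rfl | rfl | hq) hc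
    · rcases hk₁ e he hc with h | ⟨r, hr, h⟩
      · exact ⟨p, by simp, h⟩
      · exact ⟨r, by simp [hr], h⟩
    · rcases hk₂ e he hc with h | ⟨r, hr, h⟩
      · exact ⟨p, by simp, h⟩
      · exact ⟨r, by simp [hr], h⟩
    · exact ⟨q, by simp [hq], hc⟩

/-! ## Embeddings -/

lemma conf_map {V W : Type*} {F : SimpleGraph W} {G : SimpleGraph V} (φ : F ↪g G)
    (e f : Sym2 W) : Conf G (e.map φ) (f.map φ) ↔ Conf F e f := by
  constructor
  · rintro ⟨u, hu, v, hv, h⟩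
    rw [Sym2.mem_map] at hu hv
    obtain ⟨a, ha, rfl⟩ := hu
    obtain ⟨b, hb, rfl⟩ := hv
    exact ⟨a, ha, b, hb, h.imp (fun h => φ.injective h) (fun h => φ.map_adj_iff.1 h)⟩
  · rintro ⟨u, hu, v, hv, h⟩
    exact ⟨φ u, Sym2.mem_map.2 ⟨u, hu, rfl⟩, φ v, Sym2.mem_map.2 ⟨v, hv, rfl⟩,
      h.imp (fun h => congrArg φ h) (fun h => φ.map_adj_iff.2 h)⟩

lemma wi_of_embedding {V W : Type*} [Finite V] {F : SimpleGraph W} {G : SimpleGraph V}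
    (φ : F ↪g G) (M₀ : Set (Sym2 V)) (h₀ : IsInducedMatching G M₀)
    (hfar : ∀ f ∈ F.edgeSet, ∀ m ∈ M₀, ¬ Conf G (f.map φ) m)
    (hcov : ∀ e ∈ G.edgeSet, (∃ m ∈ M₀, Conf G e m) ∨ ∃ f ∈ F.edgeSet, f.map φ = e)
    (hG : WellIndumatched G) : WellIndumatched F := by
  have hinj : Function.Injective (Sym2.map φ) := Sym2.map.injective φ.injective
  have h02 := isIM_iff.1 h₀
  have key : ∀ M, IsMaximalInducedMatching F M →
      IsMaximalInducedMatching G (M₀ ∪ Sym2.map φ '' M) ∧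
        (M₀ ∪ Sym2.map φ '' M).ncard = M₀.ncard + M.ncard := by
    intro M hM
    have hM1 := isMIM_iff.1 hM
    have hM2 := isIM_iff.1 hM1.1
    constructor
    · rw [isMIM_iff, isIM_iff]
      refine ⟨⟨?_, ?_⟩, ?_⟩
      · rintro e (he | ⟨f, hf, rfl⟩)
        · exact h02.1 he
        · have := hM2.1 hf
          induction f with
          | _ a b => simpa using this
      · rintro a (ha | ⟨a, ha, rfl⟩) b (hb | ⟨b, hb, rfl⟩) hab
        · exact h02.2 a ha b hb hab
        · exact absurd hab.symm (hfar b (hM2.1 hb) a ha)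
        · exact absurd hab (hfar a (hM2.1 ha) b hb)
        · rw [hM2.2 a ha b hb ((conf_map φ a b).1 hab)]
      · intro e he
        rcases hcov e he with ⟨m, hm, h⟩ | ⟨f, hf, rfl⟩
        · exact ⟨m, Or.inl hm, h⟩
        · obtain ⟨g, hg, h⟩ := hM1.2 f hf
          exact ⟨g.map φ, Or.inr ⟨g, hg, rfl⟩, (conf_map φ f g).2 h⟩
    · rw [Set.ncard_union_eq, Set.ncard_image_of_injective _ hinj]
      rw [Set.disjoint_left]
      rintro a ha ⟨f, hf, rfl⟩
      exact hfar f (hM2.1 hf) _ ha (Conf.refl _)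
  intro M N hM hN
  obtain ⟨a, b⟩ := key M hM
  obtain ⟨c, d⟩ := key N hN
  have := hG _ _ a c
  omega

lemma wi_of_iso {V W : Type*} [Finite V] {F : SimpleGraph W} {G : SimpleGraph V}
    (φ : F ≃g G) (hG : WellIndumatched G) : WellIndumatched F := by
  apply wi_of_embedding φ.toEmbedding ∅ _ _ _ hG
  · rw [isIM_iff]; simp
  · simp
  · intro e he
    right
    induction e with
    | _ a b =>
      refine ⟨s(φ.symm a, φ.symm b), ?_, by simp⟩
      exact φ.symm.map_adj_iff.2 he

/-! ## Minimality -/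

/-- Minimal well-indumatched graph of girth at least `9`. -/
def MinWI {V : Type*} (G : SimpleGraph V) : Prop :=
  WellIndumatched G ∧ 9 ≤ G.girth ∧
      ∀ H : G.Subgraph, H ≠ ⊤ → ¬ (WellIndumatched H.coe ∧ 9 ≤ H.coe.girth)

lemma map_iso {V W : Type*} {F : SimpleGraph W} {G : SimpleGraph V}
    (φ : F →g G) (hφ : Function.Injective φ) (K : F.Subgraph) :
    Nonempty (K.coe ≃g (K.map φ).coe) := by
  refine ⟨⟨Equiv.ofBijective (fun v => ⟨φ v.1, ⟨v.1, v.2, rfl⟩⟩) ⟨?_, ?_⟩, ?_⟩⟩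
  · intro a b h
    exact Subtype.ext (hφ (congrArg Subtype.val h))
  · rintro ⟨_, v, hv, rfl⟩
    exact ⟨⟨v, hv⟩, rfl⟩
  · rintro ⟨a, ha⟩ ⟨b, hb⟩
    change (∃ c d, K.Adj c d ∧ φ c = φ a ∧ φ d = φ b) ↔ K.Adj a b
    constructor
    · rintro ⟨c, d, h, h1, h2⟩
      rw [← hφ h1, ← hφ h2]; exact h
    · intro h
      exact ⟨a, b, h, rfl, rfl⟩

lemma girth_of_hom {V W : Type*} {F : SimpleGraph W} {G : SimpleGraph V}
    (φ : F →g G) (hφ : Function.Injective φ) (hF : ¬ F.IsAcyclic) : G.girth ≤ F.girth :=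
  IsContained.girth_le ⟨⟨φ, hφ⟩⟩ hF

lemma min_hom {V W : Type*} [Finite V] {F : SimpleGraph W} {G : SimpleGraph V} (hG : MinWI G)
    (φ : F →g G) (hφ : Function.Injective φ) (hF : WellIndumatched F) (hc : ¬ F.IsAcyclic) :
    ∃ e : F ≃g G, ∀ p, e p = φ p := by
  have : Finite W := Finite.of_injective φ hφ
  obtain ⟨i⟩ := map_iso φ hφ ⊤
  have i2 : F ≃g ((⊤ : F.Subgraph).map φ).coe := (Subgraph.topIso).symm.trans i
  have htop : (⊤ : F.Subgraph).map φ = ⊤ := by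
    by_contra hne
    refine hG.2.2 _ hne ⟨wi_of_iso i2.symm hF, ?_⟩
    rw [← i2.girth_eq]
    exact hG.2.1.trans (girth_of_hom φ hφ hc)
  have hadj : ∀ a b, G.Adj a b → ∃ c d, F.Adj c d ∧ φ c = a ∧ φ d = b := by
    intro a b hab
    have : ((⊤ : F.Subgraph).map φ).Adj a b := by rw [htop]; exact hab
    simpa [Relation.Map] using this
  have hsurj : Function.Surjective φ := by
    intro v
    have : v ∈ ((⊤ : F.Subgraph).map φ).verts := by rw [htop]; trivial
    simpa using this
  refine ⟨⟨Equiv.ofBijective φ ⟨hφ, hsurj⟩, ?_⟩, fun p => rfl⟩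
  intro a b
  change G.Adj (φ a) (φ b) ↔ F.Adj a b
  constructor
  · intro h
    obtain ⟨c, d, h, h1, h2⟩ := hadj _ _ h
    rw [← hφ h1, ← hφ h2]; exact h
  · exact fun h => φ.map_adj h

lemma min_edge {V : Type*} [Finite V] {G : SimpleGraph V} (hG : MinWI G) {a b : V}
    (hab : G.Adj a b) :
    (G.induce {v | v ≠ a ∧ v ≠ b ∧ ¬ G.Adj v a ∧ ¬ G.Adj v b}).IsAcyclic := by
  by_contra hc
  set S : Set V := {v | v ≠ a ∧ v ≠ b ∧ ¬ G.Adj v a ∧ ¬ G.Adj v b} with hS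
  have hwi : WellIndumatched (G.induce S) := by
    apply wi_of_embedding (Embedding.induce S) {s(a, b)} _ _ _ hG.1
    · rw [isIM_iff]
      simp only [Set.singleton_subset_iff, Set.mem_singleton_iff]
      exact ⟨hab, by rintro _ rfl _ rfl _; rfl⟩
    · rintro f hf m rfl ⟨u, hu, v, hv, h⟩
      rw [Sym2.mem_map] at hu
      obtain ⟨⟨w, hw⟩, -, rfl⟩ := hu
      simp only [hS, Set.mem_ofPred_eq] at hw
      change w = v ∨ G.Adj w v at h
      simp only [Sym2.mem_iff] at hv
      rcases hv with rfl | rfl <;> tauto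
    · intro e he
      induction e with
      | _ x y =>
        by_cases hx : x ∈ S
        · by_cases hy : y ∈ S
          · right
            exact ⟨s(⟨x, hx⟩, ⟨y, hy⟩), by simpa using he, rfl⟩
          · left
            refine ⟨s(a, b), rfl, ?_⟩
            simp only [hS, Set.mem_ofPred_eq] at hy
            by_cases h1 : y = a ∨ G.Adj y a
            · exact ⟨y, by simp, a, by simp, h1⟩
            · exact ⟨y, by simp, b, by simp, by tauto⟩
        · left
          refine ⟨s(a, b), rfl, ?_⟩
          simp only [hS, Set.mem_ofPred_eq] at hx
          by_cases h1 : x = a ∨ G.Adj x a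
          · exact ⟨x, by simp, a, by simp, h1⟩
          · exact ⟨x, by simp, b, by simp, by tauto⟩
  obtain ⟨e, he⟩ := min_hom hG (Embedding.induce (G := G) S).toHom
    (Embedding.induce (G := G) S).injective hwi hc
  obtain ⟨⟨w, hw⟩, h⟩ := e.surjective a
  rw [he] at h
  exact hw.1 h

/-! ## Cyclic coordinates -/

/-- `c` is a cyclic sequence of period `n` running around a cycle of `G`. -/
structure Cyc {V : Type*} (G : SimpleGraph V) (n : ℤ) (c : ℤ → V) : Prop where
  three : 3 ≤ n
  per : ∀ i, c (i + n) = c i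
  inj : ∀ i j, c i = c j → i < j + n → j < i + n → i = j
  adj : ∀ i, G.Adj (c i) (c (i + 1))

/-- Cyclic coordinates of a closed walk. -/
def cz {V : Type*} {G : SimpleGraph V} {v : V} (C : G.Walk v v) (i : ℤ) : V :=
  C.getVert ((i % (C.length : ℤ)).toNat)

lemma cz_nat {V : Type*} {G : SimpleGraph V} {v : V} (C : G.Walk v v) {i : ℕ}
    (hi : i ≤ C.length) : cz C i = C.getVert i := by
  unfold cz
  rcases hi.lt_or_eq with h | h
  · rw [Int.emod_eq_of_lt (by omega) (by omega)]; simp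
  · subst h; simp

lemma cz_cyc {V : Type*} {G : SimpleGraph V} {v : V} (C : G.Walk v v) (hC : C.IsCycle) :
    Cyc G C.length (cz C) := by
  have h3 := hC.three_le_length
  have hper : ∀ i, cz C (i + C.length) = cz C i := by
    intro i; unfold cz; simp
  refine ⟨by exact_mod_cast h3, hper, ?_, ?_⟩
  · intro i j h h1 h2
    unfold cz at h
    have hi := Int.emod_nonneg i (b := (C.length : ℤ)) (by omega)
    have hj := Int.emod_nonneg j (b := (C.length : ℤ)) (by omega)
    have hi' := Int.emod_lt_of_pos i (b := (C.length : ℤ)) (by omega)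
    have hj' := Int.emod_lt_of_pos j (b := (C.length : ℤ)) (by omega)
    have := hC.getVert_injOn' (x₁ := (i % (C.length : ℤ)).toNat)
      (x₂ := (j % (C.length : ℤ)).toNat) (by simp only [Set.mem_ofPred_eq]; omega)
      (by simp only [Set.mem_ofPred_eq]; omega) h
    have hmod : i % (C.length : ℤ) = j % (C.length : ℤ) := by omega
    have hd : (C.length : ℤ) ∣ i - j := 
      Int.ModEq.dvd (Int.ModEq.symm hmod)
    have : i - j = 0 := Int.eq_zero_of_abs_lt_dvd hd (by rw [abs_lt]; constructor <;> omega)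
    omega
  · intro i
    have hi := Int.emod_nonneg i (b := (C.length : ℤ)) (by omega)
    have hi' := Int.emod_lt_of_pos i (b := (C.length : ℤ)) (by omega)
    have e1 : cz C i = cz C (((i % (C.length : ℤ)).toNat : ℕ) : ℤ) := by
      unfold cz; rw [Int.toNat_of_nonneg hi]; simp
    have e2 : cz C (i + 1) = cz C (((i % (C.length : ℤ)).toNat + 1 : ℕ) : ℤ) := by
      unfold cz; push_cast; rw [Int.toNat_of_nonneg hi]; simp
    rw [e1, e2, cz_nat C (by omega), cz_nat C (by omega)]
    exact C.adj_getVert_succ (by omega)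

lemma mem_support_cz {V : Type*} {G : SimpleGraph V} {v : V} (C : G.Walk v v) {w : V}
    (h : w ∈ C.support) : ∃ i, w = cz C i := by
  obtain ⟨k, rfl, hk⟩ := Walk.mem_support_iff_exists_getVert.1 h
  exact ⟨k, (cz_nat C hk).symm⟩

namespace Cyc

variable {V : Type*} {G : SimpleGraph V} {n : ℤ} {c : ℤ → V}

lemma per_mul (h : Cyc G n c) (i m : ℤ) : c (i + m * n) = c i := by
  induction m using Int.induction_on with
  | zero => simp
  | succ k ih => rw [add_mul, one_mul, ← add_assoc, h.per, ih]
  | pred k ih => rw [← h.per, ← ih]; ring_nf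

lemma rep (h : Cyc G n c) (i j : ℤ) : ∃ k, i ≤ k ∧ k < i + n ∧ c k = c j ∧ n ∣ j - k := by
  have h3 := h.three
  refine ⟨i + (j - i) % n, ?_, ?_, ?_, ?_⟩
  · have := Int.emod_nonneg (j - i) (b := n) (by omega); omega
  · have := Int.emod_lt_of_pos (j - i) (b := n) (by omega); omega
  · have h1 := Int.emod_add_mul_ediv (j - i) n
    have : j = (i + (j - i) % n) + ((j - i) / n) * n := by linarith
    conv_rhs => rw [this]
    rw [h.per_mul]
  · refine ⟨(j - i) / n, ?_⟩
    have h1 := Int.emod_add_mul_ediv (j - i) n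
    linarith

lemma eq_iff (h : Cyc G n c) (i j : ℤ) : c i = c j ↔ n ∣ i - j := by
  constructor
  · intro hij
    obtain ⟨k, hk1, hk2, hk3, hk4⟩ := h.rep i j
    have := h.inj i k (by rw [hk3, hij]) (by omega) (by omega)
    subst this
    rw [← neg_sub]; exact hk4.neg_right
  · rintro ⟨m, hm⟩
    have : i = j + m * n := by linarith
    rw [this, h.per_mul]

lemma adj' (h : Cyc G n c) (i : ℤ) : G.Adj (c i) (c (i - 1)) := by
  have := h.adj (i - 1)
  rw [sub_add_cancel] at this
  exact this.symm

lemma arc (h : Cyc G n c) (i : ℤ) (k : ℕ) (hk : (k : ℤ) < n) :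
    ∃ p : G.Walk (c i) (c (i + k)), p.IsPath ∧ p.length = k ∧
      ∀ v, v ∈ p.support ↔ ∃ j, i ≤ j ∧ j ≤ i + k ∧ v = c j := by
  induction k with
  | zero =>
    refine ⟨(Walk.nil : G.Walk (c i) (c i)).copy rfl (by simp), by simp, by simp, ?_⟩
    intro v
    simp only [Walk.support_copy, Walk.support_nil, List.mem_singleton]
    constructor
    · rintro rfl; exact ⟨i, by simp⟩
    · rintro ⟨j, h1, h2, rfl⟩
      have : j = i := by push_cast at h2; omega
      rw [this]
  | succ k ih =>
    obtain ⟨p, hp, hl, hs⟩ := ih (by push_cast at hk; omega)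
    have e : c (i + k + 1) = c (i + (k + 1 : ℕ)) := by push_cast; ring_nf
    refine ⟨(p.concat (h.adj (i + k))).copy rfl e, ?_, ?_, ?_⟩
    · simp only [Walk.isPath_copy]
      refine hp.concat ?_ _
      rw [hs]
      rintro ⟨j, h1, h2, h3⟩
      have := h.inj _ _ h3 (by push_cast at hk; omega) (by omega)
      omega
    · simp [hl]
    · intro v
      simp only [Walk.support_copy, Walk.support_concat, List.concat_eq_append, List.mem_append,
        List.mem_singleton, hs]
      constructor
      · rintro (⟨j, h1, h2, rfl⟩ | rfl)
        · exact ⟨j, h1, by push_cast; omega, rfl⟩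
        · exact ⟨i + k + 1, by omega, by push_cast; omega, rfl⟩
      · rintro ⟨j, h1, h2, rfl⟩
        push_cast at h2
        by_cases hj : j ≤ i + k
        · exact Or.inl ⟨j, h1, hj, rfl⟩
        · right; congr 1; omega

end Cyc

lemma two_paths {V : Type*} {G : SimpleGraph V} {u v : V} {p q : G.Walk u v}
    (hp : p.IsPath) (hq : q.IsPath) {w : V} (hw : w ∈ p.support) (hw' : w ∉ q.support) :
    G.girth ≤ p.length + q.length := by
  set H : SimpleGraph V := fromEdgeSet {e | e ∈ p.edges ∨ e ∈ q.edges} with hH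
  have hpe : ∀ e ∈ p.edges, e ∈ H.edgeSet := by
    intro e he
    rw [hH, edgeSet_fromEdgeSet]
    exact ⟨Or.inl he, G.not_isDiag_of_mem_edgeSet (p.edges_subset_edgeSet he)⟩
  have hqe : ∀ e ∈ q.edges, e ∈ H.edgeSet := by
    intro e he
    rw [hH, edgeSet_fromEdgeSet]
    exact ⟨Or.inr he, G.not_isDiag_of_mem_edgeSet (q.edges_subset_edgeSet he)⟩
  have hHG : H ≤ G := by
    intro a b hab
    rw [hH, fromEdgeSet_adj] at hab
    rcases hab.1 with h | h
    · exact p.edges_subset_edgeSet h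
    · exact q.edges_subset_edgeSet h
  have hac : ¬ H.IsAcyclic := by
    intro hac
    have := hac.path_unique ⟨p.transfer H hpe, hp.transfer hpe⟩ ⟨q.transfer H hqe, hq.transfer hqe⟩
    have h2 := congrArg (fun x : H.Path u v => x.1.support) this
    simp only [Walk.support_transfer] at h2
    rw [h2] at hw
    exact hw' hw
  unfold IsAcyclic at hac
  push Not at hac
  obtain ⟨x, D, hD⟩ := hac
  have h1 : G.girth ≤ (D.mapLe hHG).length := girth_le_length (hD.mapLe hHG)
  have h2 : D.edges.length ≤ (p.edges ++ q.edges).length := by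
    apply List.Subperm.length_le
    apply hD.edges_nodup.subperm
    intro e he
    have := D.edges_subset_edgeSet he
    rw [hH, edgeSet_fromEdgeSet] at this
    simpa using this.1
  simp at h1 h2
  omega

namespace Cyc

variable {V : Type*} {G : SimpleGraph V} {n : ℤ} {c : ℤ → V}

/-- chordless -/
lemma chord (h : Cyc G n c) (hg : (G.girth : ℤ) = n) (hn : 9 ≤ n) {i j : ℤ}
    (hij : G.Adj (c i) (c j)) (h1 : i < j) (h2 : j < i + n) : j = i + 1 ∨ j = i + n - 1 := by
  by_contra! hc
  have hne : c i ≠ c j := hij.ne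
  by_cases hh : 2 * (j - i) ≤ n
  · obtain ⟨p, hp, hl, hs⟩ := h.arc i (j - i).toNat (by omega)
    have e : i + ((j - i).toNat : ℤ) = j := by omega
    have := two_paths (p := p) (q := (hij.toWalk).copy rfl (by rw [e])) (w := c (i + 1)) hp
      (by simp [hne]) ((hs _).2 ⟨i + 1, by omega, by omega, rfl⟩) (by
        simp only [Walk.support_copy, Adj.toWalk, Walk.support_cons, Walk.support_nil,
          List.mem_cons, List.not_mem_nil, or_false, not_or]
        refine ⟨fun hx => ?_, fun hx => ?_⟩
        · have := h.inj _ _ hx (by omega) (by omega); omega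
        · have := h.inj _ _ hx (by omega) (by omega); omega)
    simp [hl] at this
    omega
  · obtain ⟨p, hp, hl, hs⟩ := h.arc j (i + n - j).toNat (by omega)
    have e : c (j + ((i + n - j).toNat : ℤ)) = c i := by
      rw [← h.per i]; congr 1; omega
    have := two_paths (p := p) (q := (hij.symm.toWalk).copy rfl (by rw [e])) (w := c (j + 1)) hp
      (by simp [hne.symm]) ((hs _).2 ⟨j + 1, by omega, by omega, rfl⟩) (by
        simp only [Walk.support_copy, Adj.toWalk, Walk.support_cons, Walk.support_nil,
          List.mem_cons, List.not_mem_nil, or_false, not_or]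
        refine ⟨fun hx => ?_, fun hx => ?_⟩
        · have := h.inj _ _ hx (by omega) (by omega); omega
        · rw [← h.per i] at hx
          have := h.inj _ _ hx (by omega) (by omega); omega)
    simp [hl] at this
    omega

lemma ear (h : Cyc G n c) {z : V} (hz : ∀ j, z ≠ c j) {i : ℤ} (hzi : G.Adj z (c i)) (j : ℤ) :
    ∃ p : G.Walk z (c j), p.IsPath ∧ 2 * (p.length : ℤ) ≤ n + 2 ∧ c i ∈ p.support ∧
      ∀ w ∈ p.support, w ≠ z → ∃ k, w = c k := by
  obtain ⟨k, hk1, hk2, hk3, -⟩ := h.rep i j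
  rw [← hk3]
  by_cases hh : 2 * (k - i) ≤ n
  · obtain ⟨p, hp, hl, hs⟩ := h.arc i (k - i).toNat (by omega)
    have e : i + ((k - i).toNat : ℤ) = k := by omega
    refine ⟨Walk.cons hzi (p.copy rfl (by rw [e])), Walk.IsPath.cons (by simpa using hp) ?_,
      ?_, ?_, ?_⟩
    · simp only [Walk.support_copy]
      rw [hs]; rintro ⟨j, -, -, h⟩; exact hz j h
    · simp [hl]; omega
    · simp
    · intro w hw hne
      simp only [Walk.support_cons, List.mem_cons, Walk.support_copy, hs] at hw
      obtain ⟨j, -, -, h⟩ := hw.resolve_left hne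
      exact ⟨j, h⟩
  · obtain ⟨p, hp, hl, hs⟩ := h.arc k (i + n - k).toNat (by omega)
    have e : c (k + ((i + n - k).toNat : ℤ)) = c i := by
      rw [← h.per i]; congr 1; omega
    refine ⟨Walk.cons hzi (p.reverse.copy e rfl), Walk.IsPath.cons (by simpa using hp) ?_, ?_, ?_, ?_⟩
    · simp only [Walk.support_copy, Walk.support_reverse, List.mem_reverse]
      rw [hs]; rintro ⟨j, -, -, h⟩; exact hz j h
    · simp [hl]; omega
    · simp only [Walk.support_cons, List.mem_cons, Walk.support_copy, Walk.support_reverse,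
        List.mem_reverse]
      rw [← e]; exact Or.inr p.end_mem_support
    · intro w hw hne
      simp only [Walk.support_cons, List.mem_cons, Walk.support_copy, Walk.support_reverse,
        List.mem_reverse, hs] at hw
      obtain ⟨j, -, -, h⟩ := hw.resolve_left hne
      exact ⟨j, h⟩

end Cyc

/-- The structure of `G` around a shortest cycle, for minimal `G`. -/
structure Str {V : Type*} (G : SimpleGraph V) (n : ℤ) (c : ℤ → V) : Prop extends Cyc G n c where
  nine : 9 ≤ n
  chord : ∀ i j, G.Adj (c i) (c j) → i < j → j < i + n → j = i + 1 ∨ j = i + n - 1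
  off : ∀ z i w, (∀ j, z ≠ c j) → G.Adj (c i) z → G.Adj z w →
    w = c i ∨ ((∀ j, w ≠ c j) ∧ ∀ t, G.Adj w t → t = z)

lemma str_of_min {V : Type*} [Finite V] {G : SimpleGraph V} (hG : MinWI G) {v : V}
    (C : G.Walk v v) (hC : C.IsCycle) (hl : G.girth = C.length) : Str G C.length (cz C) := by
  have hcyc := cz_cyc C hC
  have h9 : 9 ≤ C.length := hl ▸ hG.2.1
  have hn : (9 : ℤ) ≤ C.length := by exact_mod_cast h9
  refine { hcyc with nine := hn, chord := ?_, off := ?_ }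
  · intro i j
    exact hcyc.chord (by exact_mod_cast hl) hn
  · intro z i w hz hiz hzw
    by_contra! hc
    obtain ⟨hwi, hc⟩ := hc
    have key1 : ∀ j, ∀ q : G.Walk z (cz C j), q.IsPath → q.length ≤ 3 →
        (∃ x ∈ q.support, x ≠ z ∧ ∀ k, x ≠ cz C k) → False := by
      rintro j q hq hql ⟨x, hx, hxz, hxc⟩
      obtain ⟨p, hp, hpl, -, hp2⟩ := hcyc.ear hz hiz.symm j
      have := two_paths hq hp hx (fun h' => by
        obtain ⟨k, hk⟩ := hp2 x h' hxz
        exact hxc k hk)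
      omega
    have hw : ∀ j, w ≠ cz C j := by
      rintro j rfl
      obtain ⟨p, hp, hpl, hp1, hp2⟩ := hcyc.ear hz hiz.symm j
      have := two_paths (q := hzw.toWalk) hp (by simp [hzw.ne]) hp1 (by
        simp [Adj.toWalk, hwi.symm, hiz.ne])
      simp at this
      omega
    obtain ⟨t, hwt, htz⟩ := hc hw
    have hww : ∀ j, ¬ G.Adj w (cz C j) := by
      intro j hj
      refine key1 j (Walk.cons hzw (Walk.cons hj Walk.nil)) ?_ (by simp) ⟨w, by simp, hzw.ne.symm, hw⟩
      simp [hzw.ne, hz j, hw j]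
    have htc : ∀ j, t ≠ cz C j := by
      rintro j rfl
      exact hww j hwt
    have htt : ∀ j, ¬ G.Adj t (cz C j) := by
      intro j hj
      refine key1 j (Walk.cons hzw (Walk.cons hwt (Walk.cons hj Walk.nil))) ?_ (by simp)
        ⟨w, by simp, hzw.ne.symm, hw⟩
      simp [hzw.ne, hz j, hw j, hwt.ne, htz.symm, htc j]
    have hac := min_edge hG hwt
    have hin : ∀ x ∈ C.support, x ∈ {v | v ≠ w ∧ v ≠ t ∧ ¬ G.Adj v w ∧ ¬ G.Adj v t} := by
      intro x hx
      obtain ⟨k, rfl⟩ := mem_support_cz C hx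
      exact ⟨(hw k).symm, (htc k).symm, fun h => hww k h.symm, fun h => htt k h.symm⟩
    refine hac (C.induce _ hin) ?_
    apply Walk.IsCycle.of_map (f := (Embedding.induce _).toHom)
    rw [Walk.map_induce]
    exact hC


/-! ## Local exchange rules -/

/-- distinct and non adjacent -/
def Far {V : Type*} (G : SimpleGraph V) (a b : V) : Prop := a ≠ b ∧ ¬ G.Adj a b

lemma Far.symm {V : Type*} {G : SimpleGraph V} {a b : V} (h : Far G a b) : Far G b a :=
  ⟨h.1.symm, fun h' => h.2 h'.symm⟩

def FarE {V : Type*} (G : SimpleGraph V) (a b c d : V) : Prop :=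
  Far G a c ∧ Far G a d ∧ Far G b c ∧ Far G b d

lemma FarE.not_conf {V : Type*} {G : SimpleGraph V} {a b c d : V} (h : FarE G a b c d) :
    ¬ Conf G s(a, b) s(c, d) := by
  rintro ⟨u, hu, v, hv, huv⟩
  obtain ⟨h1, h2, h3, h4⟩ := h
  simp only [Sym2.mem_iff] at hu hv
  unfold Far at *
  rcases hu with rfl | rfl <;> rcases hv with rfl | rfl <;> tauto

/-- dominated by the list `L` -/
def Dm {V : Type*} (G : SimpleGraph V) (L : List V) (a : V) : Prop :=
  ∃ u ∈ L, u = a ∨ G.Adj u a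

/-- all edges at `a` have a dominated endpoint -/
def Kill {V : Type*} (G : SimpleGraph V) (L : List V) (a : V) : Prop :=
  ∀ b, G.Adj a b → Dm G L a ∨ Dm G L b

def KillN {V : Type*} (G : SimpleGraph V) (L : List V) (u : V) : Prop :=
  Kill G L u ∧ ∀ w, G.Adj u w → Kill G L w

lemma Dm.kill {V : Type*} {G : SimpleGraph V} {L : List V} {a : V} (h : Dm G L a) :
    Kill G L a := fun _ _ => Or.inl h

lemma kill_conf {V : Type*} {G : SimpleGraph V} {L : List V} {q₁ q₂ : V}
    (h1 : KillN G L q₁) (h2 : KillN G L q₂) {e : Sym2 V} (he : e ∈ G.edgeSet)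
    (hc : Conf G e s(q₁, q₂)) : ∃ u ∈ e, Dm G L u := by
  obtain ⟨a, ha, b, hb, hab⟩ := hc
  have hk : Kill G L a := by
    simp only [Sym2.mem_iff] at hb
    rcases hb with rfl | rfl
    · rcases hab with rfl | hab
      · exact h1.1
      · exact h1.2 _ hab.symm
    · rcases hab with rfl | hab
      · exact h2.1
      · exact h2.2 _ hab.symm
  obtain ⟨d, rfl⟩ := Sym2.mem_iff_exists.1 ha
  rcases hk d he with h | h
  · exact ⟨a, ha, h⟩
  · exact ⟨d, by simp, h⟩

lemma exch2 {V : Type*} [Finite V] {G : SimpleGraph V} (hG : WellIndumatched G)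
    {p₁ p₂ q₁ q₂ q₃ q₄ r₁ r₂ r₃ r₄ : V}
    (hp : G.Adj p₁ p₂) (hq : G.Adj q₁ q₂) (hq' : G.Adj q₃ q₄) (hr : G.Adj r₁ r₂)
    (hr' : G.Adj r₃ r₄) (hrr : FarE G r₁ r₂ r₃ r₄ ∨ s(r₁, r₂) = s(r₃, r₄))
    (hpr : FarE G p₁ p₂ r₁ r₂) (hpr' : FarE G p₁ p₂ r₃ r₄)
    (hqr : FarE G q₁ q₂ r₁ r₂) (hqr' : FarE G q₁ q₂ r₃ r₄)
    (hqr2 : FarE G q₃ q₄ r₁ r₂) (hqr2' : FarE G q₃ q₄ r₃ r₄)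
    (hqq : FarE G q₁ q₂ q₃ q₄)
    (hk1 : KillN G [p₁, p₂, r₁, r₂, r₃, r₄] q₁) (hk2 : KillN G [p₁, p₂, r₁, r₂, r₃, r₄] q₂)
    (hk3 : KillN G [p₁, p₂, r₁, r₂, r₃, r₄] q₃) (hk4 : KillN G [p₁, p₂, r₁, r₂, r₃, r₄] q₄) :
    False := by
  have key : ∀ e, (∃ u ∈ e, Dm G [p₁, p₂, r₁, r₂, r₃, r₄] u) →
      Conf G e s(p₁, p₂) ∨ ∃ r ∈ ({s(r₁, r₂), s(r₃, r₄)} : Set (Sym2 V)), Conf G e r := by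
    rintro e ⟨u, hu, w, hw, hwu⟩
    have hwu' : u = w ∨ G.Adj u w := hwu.imp Eq.symm Adj.symm
    simp only [List.mem_cons, List.not_mem_nil, or_false] at hw
    rcases hw with h | h | h | h | h | h <;> rw [h] at hwu'
    · exact Or.inl ⟨u, hu, _, by simp, hwu'⟩
    · exact Or.inl ⟨u, hu, _, by simp, hwu'⟩
    · exact Or.inr ⟨s(r₁, r₂), by simp, u, hu, _, by simp, hwu'⟩
    · exact Or.inr ⟨s(r₁, r₂), by simp, u, hu, _, by simp, hwu'⟩
    · exact Or.inr ⟨s(r₃, r₄), by simp, u, hu, _, by simp, hwu'⟩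
    · exact Or.inr ⟨s(r₃, r₄), by simp, u, hu, _, by simp, hwu'⟩
  refine exchange1 (p := s(p₁, p₂)) (q₁ := s(q₁, q₂)) (q₂ := s(q₃, q₄))
    (R := {s(r₁, r₂), s(r₃, r₄)}) hG hp hq hq' ?_ ?_ ?_ ?_ hqq.not_conf ?_ ?_
  · rw [isIM_iff]
    refine ⟨?_, ?_⟩
    · rintro e (rfl | rfl)
      · exact hr
      · exact hr'
    · rintro e (rfl | rfl) f (rfl | rfl) hc
      · rfl
      · rcases hrr with h | h
        · exact (h.not_conf hc).elim
        · exact h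
      · rcases hrr with h | h
        · exact (h.not_conf hc.symm).elim
        · exact h.symm
      · rfl
  · rintro r (rfl | rfl)
    · exact hpr.not_conf
    · exact hpr'.not_conf
  · rintro r (rfl | rfl)
    · exact hqr.not_conf
    · exact hqr'.not_conf
  · rintro r (rfl | rfl)
    · exact hqr2.not_conf
    · exact hqr2'.not_conf
  · intro e he hc
    exact key e (kill_conf hk1 hk2 he hc)
  · intro e he hc
    exact key e (kill_conf hk3 hk4 he hc)

lemma exch {V : Type*} [Finite V] {G : SimpleGraph V} (hG : WellIndumatched G)
    {p₁ p₂ q₁ q₂ q₃ q₄ r₁ r₂ : V}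
    (hp : G.Adj p₁ p₂) (hq : G.Adj q₁ q₂) (hq' : G.Adj q₃ q₄) (hr : G.Adj r₁ r₂)
    (hpr : FarE G p₁ p₂ r₁ r₂) (hqr : FarE G q₁ q₂ r₁ r₂) (hqr2 : FarE G q₃ q₄ r₁ r₂)
    (hqq : FarE G q₁ q₂ q₃ q₄)
    (hk1 : KillN G [p₁, p₂, r₁, r₂, r₁, r₂] q₁) (hk2 : KillN G [p₁, p₂, r₁, r₂, r₁, r₂] q₂)
    (hk3 : KillN G [p₁, p₂, r₁, r₂, r₁, r₂] q₃) (hk4 : KillN G [p₁, p₂, r₁, r₂, r₁, r₂] q₄) :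
    False :=
  exch2 hG hp hq hq' hr hr (Or.inr rfl) hpr hpr hqr hqr hqr2 hqr2 hqq hk1 hk2 hk3 hk4

lemma killN_mem {V : Type*} {G : SimpleGraph V} {L : List V} {u : V} (h : u ∈ L) :
    KillN G L u :=
  ⟨Dm.kill ⟨u, h, Or.inl rfl⟩, fun _ hw => Dm.kill ⟨u, h, Or.inr hw⟩⟩

lemma kill_leaf {V : Type*} {G : SimpleGraph V} {L : List V} {w z : V}
    (h : ∀ t, G.Adj w t → t = z) (hz : Dm G L z) : Kill G L w := by
  intro b hb
  rw [h b hb]; exact Or.inr hz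

lemma killN_leaf {V : Type*} {G : SimpleGraph V} {L : List V} {w z : V}
    (h : ∀ t, G.Adj w t → t = z) (hz : Dm G L z) : KillN G L w := by
  refine ⟨kill_leaf h hz, fun b hb => ?_⟩
  rw [h b hb]; exact hz.kill

/-- off the cycle -/
def Off {V : Type*} (c : ℤ → V) (z : V) : Prop := ∀ j, z ≠ c j

/-- a path of length two hangs at `c i` -/
def XX {V : Type*} (G : SimpleGraph V) (c : ℤ → V) (i : ℤ) : Prop :=
  ∃ x y, Off c x ∧ G.Adj (c i) x ∧ G.Adj x y ∧ y ≠ c i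

/-- some vertex hangs at `c i` -/
def OO {V : Type*} (G : SimpleGraph V) (c : ℤ → V) (i : ℤ) : Prop :=
  ∃ x, Off c x ∧ G.Adj (c i) x

lemma XX.oo {V : Type*} {G : SimpleGraph V} {c : ℤ → V} {i : ℤ} (h : XX G c i) : OO G c i := by
  obtain ⟨x, y, h1, h2, -⟩ := h
  exact ⟨x, h1, h2⟩

lemma leaf_of_not_XX {V : Type*} {G : SimpleGraph V} {c : ℤ → V} {i : ℤ} (h : ¬ XX G c i)
    {z : V} (hz : Off c z) (hiz : G.Adj (c i) z) : ∀ t, G.Adj z t → t = c i := by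
  intro t ht
  by_contra hne
  exact h ⟨z, t, hz, hiz, ht, hne⟩

namespace Str

variable {V : Type*} {G : SimpleGraph V} {n : ℤ} {c : ℤ → V}

lemma shift (h : Str G n c) (i : ℤ) : Str G n (fun j => c (i + j)) := by
  refine ⟨⟨h.three, ?_, ?_, ?_⟩, h.nine, ?_, ?_⟩
  · intro j; change c (i + (j + n)) = _; rw [← add_assoc, h.per]
  · intro j k hjk h1 h2
    have := h.inj _ _ hjk (by omega) (by omega); omega
  · intro j; have := h.adj (i + j); rwa [add_assoc] at this
  · intro j k hjk h1 h2
    have := h.chord _ _ hjk (by omega) (by omega); omega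
  · intro z j w hz
    have hz' : ∀ k, z ≠ c k := fun k => by have := hz (k - i); simpa using this
    intro h1 h2
    rcases h.off z _ w hz' h1 h2 with h3 | ⟨h3, h4⟩
    · exact Or.inl h3
    · exact Or.inr ⟨fun k => h3 _, h4⟩

lemma off_shift (i : ℤ) (z : V) : Off (fun j => c (i + j)) z ↔ Off c z :=
  ⟨fun hz k => by have := hz (k - i); simpa using this, fun hz _ => hz _⟩

lemma XX_shift (i j : ℤ) : XX G (fun j => c (i + j)) j ↔ XX G c (i + j) := by
  unfold XX; simp only [off_shift]

lemma OO_shift (i j : ℤ) : OO G (fun j => c (i + j)) j ↔ OO G c (i + j) := by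
  unfold OO; simp only [off_shift]

lemma nbr (h : Str G n c) {i : ℤ} {w : V} (hw : G.Adj (c i) w) :
    w = c (i + 1) ∨ w = c (i - 1) ∨ Off c w := by
  by_cases ho : Off c w
  · exact Or.inr (Or.inr ho)
  · unfold Off at ho
    push Not at ho
    obtain ⟨j, rfl⟩ := ho
    obtain ⟨k, h1, h2, h3, -⟩ := h.rep i j
    rw [← h3] at hw ⊢
    have hik : i ≠ k := by rintro rfl; exact hw.ne rfl
    rcases h.chord i k hw (by omega) (by omega) with rfl | rfl
    · exact Or.inl rfl
    · right; left
      rw [← h.per (i - 1)]; congr 1; ring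

lemma far (h : Str G n c) (i j : ℤ) (h1 : i + 2 ≤ j) (h2 : j + 2 ≤ i + n) : Far G (c i) (c j) := by
  refine ⟨fun he => ?_, fun ha => ?_⟩
  · have := h.inj _ _ he (by omega) (by omega); omega
  · have := h.chord _ _ ha (by omega) (by omega); omega

lemma far_off (h : Str G n c) {z : V} (hz : Off c z) {i : ℤ} (hiz : G.Adj (c i) z) (j : ℤ)
    (hij : c i ≠ c j) : Far G z (c j) := by
  refine ⟨hz j, fun ha => ?_⟩
  rcases h.off z i _ hz hiz ha with h1 | ⟨h1, -⟩
  · exact hij h1.symm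
  · exact h1 j rfl

lemma ne (h : Str G n c) (i j : ℤ) (h1 : i ≠ j) (h2 : j < i + n) (h3 : i < j + n) : c i ≠ c j :=
  fun he => h1 (h.inj _ _ he h3 h2)

lemma far_y (h : Str G n c) {x y : V} (hx : Off c x) {i : ℤ} (hix : G.Adj (c i) x)
    (hxy : G.Adj x y) (hy : y ≠ c i) (j : ℤ) : Far G y (c j) := by
  rcases h.off x i y hx hix hxy with h1 | ⟨h1, h2⟩
  · exact (hy h1).elim
  · exact ⟨h1 j, fun ha => hx j (h2 _ ha).symm⟩

lemma leaf_y (h : Str G n c) {x y : V} (hx : Off c x) {i : ℤ} (hix : G.Adj (c i) x)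
    (hxy : G.Adj x y) (hy : y ≠ c i) : Off c y ∧ ∀ t, G.Adj y t → t = x := by
  rcases h.off x i y hx hix hxy with h1 | h1
  · exact (hy h1).elim
  · exact h1

lemma far_oo (h : Str G n c) {x x' : V} (hx : Off c x) {i : ℤ} (hix : G.Adj (c i) x)
    (hx' : Off c x') {j : ℤ} (hjx : G.Adj (c j) x') (hij : c i ≠ c j) : Far G x x' := by
  refine ⟨?_, fun ha => ?_⟩
  · rintro rfl
    exact (h.far_off hx hix j hij).2 hjx.symm
  · rcases h.off x i x' hx hix ha with h1 | ⟨-, h1⟩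
    · exact hx' i h1
    · exact hx j (h1 _ hjx.symm).symm

lemma dm {L : List V} (h : Str G n c) (j k : ℤ) (hj : c j ∈ L) (hk : k = j ∨ k = j + 1 ∨ k = j - 1) :
    Dm G L (c k) := by
  refine ⟨c j, hj, ?_⟩
  rcases hk with rfl | rfl | rfl
  · exact Or.inl rfl
  · exact Or.inr (h.adj j)
  · exact Or.inr (h.adj' j)

lemma kill_c {L : List V} (h : Str G n c) (i j k : ℤ) (hj : j = i + 1) (hk : k = i - 1)
    (h1 : Dm G L (c j)) (h2 : Dm G L (c k)) (ho : ¬ OO G c i) : Kill G L (c i) := by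
  subst hj hk
  intro b hb
  rcases h.nbr hb with rfl | rfl | h'
  · exact Or.inr h1
  · exact Or.inr h2
  · exact (ho ⟨b, h', hb⟩).elim

lemma killN_c {L : List V} (h : Str G n c) (i j k : ℤ) (hj : j = i + 1) (hk : k = i - 1)
    (h0 : Kill G L (c i)) (h1 : Kill G L (c j)) (h2 : Kill G L (c k))
    (ho : ¬ OO G c i ∨ (¬ XX G c i ∧ Dm G L (c i))) : KillN G L (c i) := by
  subst hj hk
  refine ⟨h0, fun w hw => ?_⟩
  rcases h.nbr hw with rfl | rfl | h'
  · exact h1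
  · exact h2
  · rcases ho with ho | ⟨ho, hd⟩
    · exact (ho ⟨w, h', hw⟩).elim
    · exact kill_leaf (leaf_of_not_XX ho h' hw) hd

lemma killN_x {L : List V} (h : Str G n c) {x : V} (hx : Off c x) {i : ℤ} (hix : G.Adj (c i) x)
    (h1 : Dm G L x) (h2 : Dm G L (c i)) : KillN G L x := by
  refine ⟨h1.kill, fun w hw => ?_⟩
  by_cases hwi : w = c i
  · rw [hwi]; exact h2.kill
  · exact kill_leaf (h.leaf_y hx hix hw hwi).2 h1

lemma ruleI [Finite V] (h : Str G n c) (hG : WellIndumatched G) (h0 : XX G c 0)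
    (h1 : XX G c 1) : False := by
  have h9 := h.nine
  obtain ⟨x, y, hx, hix, hxy, hy⟩ := h0
  obtain ⟨x', y', hx', hix', hxy', hy'⟩ := h1
  have l := h.leaf_y hx hix hxy hy
  have l' := h.leaf_y hx' hix' hxy' hy'
  have n01 : c 0 ≠ c 1 := h.ne _ _ (by omega) (by omega) (by omega)
  have f1 : Far G x x' := h.far_oo hx hix hx' hix' n01
  have a45 : G.Adj (c 4) (c 5) := h.adj 4
  refine exch hG (p₁ := c 0) (p₂ := c 1) (h.adj 0) hxy hxy' a45 ?_ ?_ ?_ ?_ ?_ ?_ ?_ ?_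
  · exact ⟨h.far _ _ (by omega) (by omega), h.far _ _ (by omega) (by omega),
      h.far _ _ (by omega) (by omega), h.far _ _ (by omega) (by omega)⟩
  · exact ⟨h.far_off hx hix _ (h.ne _ _ (by omega) (by omega) (by omega)),
      h.far_off hx hix _ (h.ne _ _ (by omega) (by omega) (by omega)),
      h.far_y hx hix hxy hy _, h.far_y hx hix hxy hy _⟩
  · exact ⟨h.far_off hx' hix' _ (h.ne _ _ (by omega) (by omega) (by omega)),
      h.far_off hx' hix' _ (h.ne _ _ (by omega) (by omega) (by omega)),
      h.far_y hx' hix' hxy' hy' _, h.far_y hx' hix' hxy' hy' _⟩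
  · refine ⟨f1, ⟨?_, ?_⟩, ⟨?_, ?_⟩, ⟨?_, ?_⟩⟩
    · rintro rfl; exact hx' 0 (l'.2 _ hix.symm).symm
    · intro ha; exact f1.1 (l'.2 _ ha.symm)
    · rintro rfl; exact hx 1 (l.2 _ hix'.symm).symm
    · intro ha; exact f1.1 (l.2 _ ha).symm
    · rintro rfl; exact f1.1 (l'.2 _ hxy.symm)
    · intro ha
      have := l.2 _ ha
      rw [this] at hxy'
      exact f1.2 hxy'.symm
  · exact h.killN_x hx hix ⟨c 0, by simp, Or.inr hix⟩ (h.dm 0 0 (by simp) (by simp))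
  · exact killN_leaf l.2 ⟨c 0, by simp, Or.inr hix⟩
  · exact h.killN_x hx' hix' ⟨c 1, by simp, Or.inr hix'⟩ (h.dm 1 1 (by simp) (by simp))
  · exact killN_leaf l'.2 ⟨c 1, by simp, Or.inr hix'⟩

lemma ruleIII [Finite V] (h : Str G n c) (hG : WellIndumatched G) (h0 : OO G c 0)
    (h2 : OO G c 2) (hX : ¬ XX G c 2) : False := by
  have h9 := h.nine
  obtain ⟨x, hx, hix⟩ := h0
  obtain ⟨l, hl, hil⟩ := h2
  have ll := leaf_of_not_XX hX hl hil
  refine exch hG (p₁ := c 0) (p₂ := c 1) (h.adj 0) hix hil (h.adj 4 : G.Adj (c 4) (c 5))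
    ?_ ?_ ?_ ?_ ?_ ?_ ?_ ?_
  · exact ⟨h.far _ _ (by omega) (by omega), h.far _ _ (by omega) (by omega),
      h.far _ _ (by omega) (by omega), h.far _ _ (by omega) (by omega)⟩
  · exact ⟨h.far _ _ (by omega) (by omega), h.far _ _ (by omega) (by omega),
      h.far_off hx hix _ (h.ne _ _ (by omega) (by omega) (by omega)),
      h.far_off hx hix _ (h.ne _ _ (by omega) (by omega) (by omega))⟩
  · exact ⟨h.far _ _ (by omega) (by omega), h.far _ _ (by omega) (by omega),
      h.far_off hl hil _ (h.ne _ _ (by omega) (by omega) (by omega)),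
      h.far_off hl hil _ (h.ne _ _ (by omega) (by omega) (by omega))⟩
  · exact ⟨h.far _ _ (by omega) (by omega),
      (h.far_off hl hil _ (h.ne _ _ (by omega) (by omega) (by omega))).symm,
      h.far_off hx hix _ (h.ne _ _ (by omega) (by omega) (by omega)),
      h.far_oo hx hix hl hil (h.ne _ _ (by omega) (by omega) (by omega))⟩
  · exact killN_mem (by simp)
  · exact h.killN_x hx hix ⟨c 0, by simp, Or.inr hix⟩ (h.dm 0 0 (by simp) (by simp))
  · exact h.killN_c 2 3 1 rfl rfl (h.dm 1 2 (by simp) (by simp)).kill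
      (h.dm 4 3 (by simp) (by simp)).kill (h.dm 1 1 (by simp) (by simp)).kill
      (Or.inr ⟨hX, h.dm 1 2 (by simp) (by simp)⟩)
  · exact killN_leaf ll (h.dm 1 2 (by simp) (by simp))

lemma ruleII [Finite V] (h : Str G n c) (hG : WellIndumatched G) (h0 : XX G c 0)
    (h2 : ¬ OO G c 2) (hX : ¬ XX G c 1) : False := by
  have h9 := h.nine
  obtain ⟨x, y, hx, hix, hxy, hy⟩ := h0
  have l := h.leaf_y hx hix hxy hy
  refine exch hG (p₁ := x) (p₂ := c 0) hix.symm hxy (h.adj 1 : G.Adj (c 1) (c 2))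
    (h.adj 4 : G.Adj (c 4) (c 5)) ?_ ?_ ?_ ?_ ?_ ?_ ?_ ?_
  · exact ⟨h.far_off hx hix _ (h.ne _ _ (by omega) (by omega) (by omega)),
      h.far_off hx hix _ (h.ne _ _ (by omega) (by omega) (by omega)),
      h.far _ _ (by omega) (by omega), h.far _ _ (by omega) (by omega)⟩
  · exact ⟨h.far_off hx hix _ (h.ne _ _ (by omega) (by omega) (by omega)),
      h.far_off hx hix _ (h.ne _ _ (by omega) (by omega) (by omega)),
      h.far_y hx hix hxy hy _, h.far_y hx hix hxy hy _⟩
  · exact ⟨h.far _ _ (by omega) (by omega), h.far _ _ (by omega) (by omega),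
      h.far _ _ (by omega) (by omega), h.far _ _ (by omega) (by omega)⟩
  · exact ⟨h.far_off hx hix _ (h.ne _ _ (by omega) (by omega) (by omega)),
      h.far_off hx hix _ (h.ne _ _ (by omega) (by omega) (by omega)),
      h.far_y hx hix hxy hy _, h.far_y hx hix hxy hy _⟩
  · exact killN_mem (by simp)
  · exact killN_leaf l.2 ⟨x, by simp, Or.inl rfl⟩
  · exact h.killN_c 1 2 0 rfl rfl (h.dm 0 1 (by simp) (by simp)).kill
      (h.kill_c 2 3 1 rfl rfl (h.dm 4 3 (by simp) (by simp)) (h.dm 0 1 (by simp) (by simp)) h2)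
      (h.dm 0 0 (by simp) (by simp)).kill (Or.inr ⟨hX, h.dm 0 1 (by simp) (by simp)⟩)
  · exact h.killN_c 2 3 1 rfl rfl
      (h.kill_c 2 3 1 rfl rfl (h.dm 4 3 (by simp) (by simp)) (h.dm 0 1 (by simp) (by simp)) h2)
      (h.dm 4 3 (by simp) (by simp)).kill (h.dm 0 1 (by simp) (by simp)).kill (Or.inl h2)

lemma ruleIV [Finite V] (h : Str G n c) (hG : WellIndumatched G) (h0 : OO G c 0)
    (h2 : ¬ OO G c 2) (h3 : ¬ OO G c 3) : False := by
  have h9 := h.nine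
  obtain ⟨x, hx, hix⟩ := h0
  have k3 : ∀ L, c 1 ∈ L → c 5 ∈ L → Kill G L (c 3) := fun L hL hL' =>
    h.kill_c 3 4 2 rfl rfl (h.dm 5 4 hL' (by simp)) (h.dm 1 2 hL (by simp)) h3
  refine exch hG (p₁ := c 0) (p₂ := c 1) (h.adj 0) hix (h.adj 2 : G.Adj (c 2) (c 3))
    (h.adj 5 : G.Adj (c 5) (c 6)) ?_ ?_ ?_ ?_ ?_ ?_ ?_ ?_
  · exact ⟨h.far _ _ (by omega) (by omega), h.far _ _ (by omega) (by omega),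
      h.far _ _ (by omega) (by omega), h.far _ _ (by omega) (by omega)⟩
  · exact ⟨h.far _ _ (by omega) (by omega), h.far _ _ (by omega) (by omega),
      h.far_off hx hix _ (h.ne _ _ (by omega) (by omega) (by omega)),
      h.far_off hx hix _ (h.ne _ _ (by omega) (by omega) (by omega))⟩
  · exact ⟨h.far _ _ (by omega) (by omega), h.far _ _ (by omega) (by omega),
      h.far _ _ (by omega) (by omega), h.far _ _ (by omega) (by omega)⟩
  · exact ⟨h.far _ _ (by omega) (by omega), h.far _ _ (by omega) (by omega),
      h.far_off hx hix _ (h.ne _ _ (by omega) (by omega) (by omega)),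
      h.far_off hx hix _ (h.ne _ _ (by omega) (by omega) (by omega))⟩
  · exact killN_mem (by simp)
  · exact h.killN_x hx hix ⟨c 0, by simp, Or.inr hix⟩ (h.dm 0 0 (by simp) (by simp))
  · exact h.killN_c 2 3 1 rfl rfl (h.dm 1 2 (by simp) (by simp)).kill (k3 _ (by simp) (by simp))
      (h.dm 0 1 (by simp) (by simp)).kill (Or.inl h2)
  · exact h.killN_c 3 4 2 rfl rfl (k3 _ (by simp) (by simp)) (h.dm 5 4 (by simp) (by simp)).kill
      (h.dm 1 2 (by simp) (by simp)).kill (Or.inl h3)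

lemma ruleV11 [Finite V] (h : Str G n c) (hG : WellIndumatched G) (h0 : OO G c 0)
    (h3 : OO G c 3) (hX0 : ¬ XX G c 0) (hX3 : ¬ XX G c 3) (hn : 11 ≤ n) : False := by
  obtain ⟨x, hx, hix⟩ := h0
  obtain ⟨z, hz, hiz⟩ := h3
  refine exch2 hG (h.adj 1 : G.Adj (c 1) (c 2)) hix hiz (h.adj 5 : G.Adj (c 5) (c 6))
    (h.adj (-3) : G.Adj (c (-3)) (c (-2))) (Or.inl ?_) ?_ ?_ ?_ ?_ ?_ ?_ ?_ ?_ ?_ ?_ ?_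
  · exact ⟨(h.far _ _ (by omega) (by omega)).symm, (h.far _ _ (by omega) (by omega)).symm,
      (h.far _ _ (by omega) (by omega)).symm, (h.far _ _ (by omega) (by omega)).symm⟩
  · exact ⟨h.far _ _ (by omega) (by omega), h.far _ _ (by omega) (by omega),
      h.far _ _ (by omega) (by omega), h.far _ _ (by omega) (by omega)⟩
  · exact ⟨(h.far _ _ (by omega) (by omega)).symm, (h.far _ _ (by omega) (by omega)).symm,
      (h.far _ _ (by omega) (by omega)).symm, (h.far _ _ (by omega) (by omega)).symm⟩
  · exact ⟨h.far _ _ (by omega) (by omega), h.far _ _ (by omega) (by omega),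
      h.far_off hx hix _ (h.ne _ _ (by omega) (by omega) (by omega)),
      h.far_off hx hix _ (h.ne _ _ (by omega) (by omega) (by omega))⟩
  · exact ⟨(h.far _ _ (by omega) (by omega)).symm, (h.far _ _ (by omega) (by omega)).symm,
      h.far_off hx hix _ (h.ne _ _ (by omega) (by omega) (by omega)),
      h.far_off hx hix _ (h.ne _ _ (by omega) (by omega) (by omega))⟩
  · exact ⟨h.far _ _ (by omega) (by omega), h.far _ _ (by omega) (by omega),
      h.far_off hz hiz _ (h.ne _ _ (by omega) (by omega) (by omega)),
      h.far_off hz hiz _ (h.ne _ _ (by omega) (by omega) (by omega))⟩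
  · exact ⟨(h.far _ _ (by omega) (by omega)).symm, (h.far _ _ (by omega) (by omega)).symm,
      h.far_off hz hiz _ (h.ne _ _ (by omega) (by omega) (by omega)),
      h.far_off hz hiz _ (h.ne _ _ (by omega) (by omega) (by omega))⟩
  · exact ⟨h.far _ _ (by omega) (by omega),
      (h.far_off hz hiz _ (h.ne _ _ (by omega) (by omega) (by omega))).symm,
      h.far_off hx hix _ (h.ne _ _ (by omega) (by omega) (by omega)),
      h.far_oo hx hix hz hiz (h.ne _ _ (by omega) (by omega) (by omega))⟩
  · exact h.killN_c 0 1 (-1) rfl rfl (h.dm 1 0 (by simp) (by simp)).kill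
      (h.dm 1 1 (by simp) (by simp)).kill (h.dm (-2) (-1) (by simp) (by simp)).kill
      (Or.inr ⟨hX0, h.dm 1 0 (by simp) (by simp)⟩)
  · exact killN_leaf (leaf_of_not_XX hX0 hx hix) (h.dm 1 0 (by simp) (by simp))
  · exact h.killN_c 3 4 2 rfl rfl (h.dm 2 3 (by simp) (by simp)).kill
      (h.dm 5 4 (by simp) (by simp)).kill (h.dm 2 2 (by simp) (by simp)).kill
      (Or.inr ⟨hX3, h.dm 2 3 (by simp) (by simp)⟩)
  · exact killN_leaf (leaf_of_not_XX hX3 hz hiz) (h.dm 2 3 (by simp) (by simp))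

lemma ruleV9 [Finite V] (h : Str G 9 c) (hG : WellIndumatched G) (h0 : OO G c 0)
    (h3 : OO G c 3) (h6 : OO G c 6) (h4 : ¬ OO G c 4) (h8 : ¬ OO G c (-1))
    (hX0 : ¬ XX G c 0) (hX3 : ¬ XX G c 3) : False := by
  obtain ⟨x, hx, hix⟩ := h0
  obtain ⟨z, hz, hiz⟩ := h3
  obtain ⟨w, hw, hiw⟩ := h6
  have e7 : c (-2) = c 7 := (h.per (-2)).symm
  refine exch hG (h.adj 1 : G.Adj (c 1) (c 2)) hix hiz hiw ?_ ?_ ?_ ?_ ?_ ?_ ?_ ?_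
  · exact ⟨h.far _ _ (by omega) (by omega),
      (h.far_off hw hiw _ (h.ne _ _ (by omega) (by omega) (by omega))).symm,
      h.far _ _ (by omega) (by omega),
      (h.far_off hw hiw _ (h.ne _ _ (by omega) (by omega) (by omega))).symm⟩
  · exact ⟨h.far _ _ (by omega) (by omega),
      (h.far_off hw hiw _ (h.ne _ _ (by omega) (by omega) (by omega))).symm,
      h.far_off hx hix _ (h.ne _ _ (by omega) (by omega) (by omega)),
      h.far_oo hx hix hw hiw (h.ne _ _ (by omega) (by omega) (by omega))⟩
  · exact ⟨h.far _ _ (by omega) (by omega),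
      (h.far_off hw hiw _ (h.ne _ _ (by omega) (by omega) (by omega))).symm,
      h.far_off hz hiz _ (h.ne _ _ (by omega) (by omega) (by omega)),
      h.far_oo hz hiz hw hiw (h.ne _ _ (by omega) (by omega) (by omega))⟩
  · exact ⟨h.far _ _ (by omega) (by omega),
      (h.far_off hz hiz _ (h.ne _ _ (by omega) (by omega) (by omega))).symm,
      h.far_off hx hix _ (h.ne _ _ (by omega) (by omega) (by omega)),
      h.far_oo hx hix hz hiz (h.ne _ _ (by omega) (by omega) (by omega))⟩
  · refine h.killN_c 0 1 (-1) rfl rfl (h.dm 1 0 (by simp) (by simp)).kill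
      (h.dm 1 1 (by simp) (by simp)).kill
      (h.kill_c (-1) 0 (-2) rfl rfl (h.dm 1 0 (by simp) (by simp)) ?_ h8)
      (Or.inr ⟨hX0, h.dm 1 0 (by simp) (by simp)⟩)
    rw [e7]
    exact h.dm 6 7 (by simp) (by simp)
  · exact killN_leaf (leaf_of_not_XX hX0 hx hix) (h.dm 1 0 (by simp) (by simp))
  · exact h.killN_c 3 4 2 rfl rfl (h.dm 2 3 (by simp) (by simp)).kill
      (h.kill_c 4 5 3 rfl rfl (h.dm 6 5 (by simp) (by simp)) (h.dm 2 3 (by simp) (by simp)) h4)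
      (h.dm 2 2 (by simp) (by simp)).kill
      (Or.inr ⟨hX3, h.dm 2 3 (by simp) (by simp)⟩)
  · exact killN_leaf (leaf_of_not_XX hX3 hz hiz) (h.dm 2 3 (by simp) (by simp))

lemma ruleVI12 [Finite V] (h : Str G n c) (hG : WellIndumatched G) (ho : ∀ i, ¬ OO G c i)
    (hn : 12 ≤ n) : False := by
  refine exch2 hG (h.adj 1 : G.Adj (c 1) (c 2)) (h.adj 0 : G.Adj (c 0) (c 1))
    (h.adj 3 : G.Adj (c 3) (c 4)) (h.adj 6 : G.Adj (c 6) (c 7))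
    (h.adj (-3) : G.Adj (c (-3)) (c (-2))) (Or.inl ?_) ?_ ?_ ?_ ?_ ?_ ?_ ?_ ?_ ?_ ?_ ?_
  · exact ⟨(h.far _ _ (by omega) (by omega)).symm, (h.far _ _ (by omega) (by omega)).symm,
      (h.far _ _ (by omega) (by omega)).symm, (h.far _ _ (by omega) (by omega)).symm⟩
  · exact ⟨h.far _ _ (by omega) (by omega), h.far _ _ (by omega) (by omega),
      h.far _ _ (by omega) (by omega), h.far _ _ (by omega) (by omega)⟩
  · exact ⟨(h.far _ _ (by omega) (by omega)).symm, (h.far _ _ (by omega) (by omega)).symm,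
      (h.far _ _ (by omega) (by omega)).symm, (h.far _ _ (by omega) (by omega)).symm⟩
  · exact ⟨h.far _ _ (by omega) (by omega), h.far _ _ (by omega) (by omega),
      h.far _ _ (by omega) (by omega), h.far _ _ (by omega) (by omega)⟩
  · exact ⟨(h.far _ _ (by omega) (by omega)).symm, (h.far _ _ (by omega) (by omega)).symm,
      (h.far _ _ (by omega) (by omega)).symm, (h.far _ _ (by omega) (by omega)).symm⟩
  · exact ⟨h.far _ _ (by omega) (by omega), h.far _ _ (by omega) (by omega),
      h.far _ _ (by omega) (by omega), h.far _ _ (by omega) (by omega)⟩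
  · exact ⟨(h.far _ _ (by omega) (by omega)).symm, (h.far _ _ (by omega) (by omega)).symm,
      (h.far _ _ (by omega) (by omega)).symm, (h.far _ _ (by omega) (by omega)).symm⟩
  · exact ⟨h.far _ _ (by omega) (by omega), h.far _ _ (by omega) (by omega),
      h.far _ _ (by omega) (by omega), h.far _ _ (by omega) (by omega)⟩
  · exact h.killN_c 0 1 (-1) rfl rfl (h.dm 1 0 (by simp) (by simp)).kill
      (h.dm 1 1 (by simp) (by simp)).kill (h.dm (-2) (-1) (by simp) (by simp)).kill
      (Or.inl (ho _))
  · exact killN_mem (by simp)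
  · exact h.killN_c 3 4 2 rfl rfl (h.dm 2 3 (by simp) (by simp)).kill
      (h.kill_c 4 5 3 rfl rfl (h.dm 6 5 (by simp) (by simp)) (h.dm 2 3 (by simp) (by simp)) (ho _))
      (h.dm 2 2 (by simp) (by simp)).kill (Or.inl (ho _))
  · exact h.killN_c 4 5 3 rfl rfl
      (h.kill_c 4 5 3 rfl rfl (h.dm 6 5 (by simp) (by simp)) (h.dm 2 3 (by simp) (by simp)) (ho _))
      (h.dm 6 5 (by simp) (by simp)).kill (h.dm 2 3 (by simp) (by simp)).kill (Or.inl (ho _))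

lemma ruleVI9 [Finite V] (h : Str G 9 c) (hG : WellIndumatched G) (ho : ∀ i, ¬ OO G c i) :
    False := by
  have e9 : c 9 = c 0 := h.per 0
  have d8 : ∀ L, c 0 ∈ L → Dm G L (c 8) := fun L hL =>
    h.dm 9 8 (by rw [e9]; exact hL) (by simp)
  refine exch hG (h.adj 4 : G.Adj (c 4) (c 5)) (h.adj 3 : G.Adj (c 3) (c 4))
    (h.adj 6 : G.Adj (c 6) (c 7)) (h.adj 0 : G.Adj (c 0) (c 1)) ?_ ?_ ?_ ?_ ?_ ?_ ?_ ?_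
  · exact ⟨(h.far _ _ (by omega) (by omega)).symm, (h.far _ _ (by omega) (by omega)).symm,
      (h.far _ _ (by omega) (by omega)).symm, (h.far _ _ (by omega) (by omega)).symm⟩
  · exact ⟨(h.far _ _ (by omega) (by omega)).symm, (h.far _ _ (by omega) (by omega)).symm,
      (h.far _ _ (by omega) (by omega)).symm, (h.far _ _ (by omega) (by omega)).symm⟩
  · exact ⟨(h.far _ _ (by omega) (by omega)).symm, (h.far _ _ (by omega) (by omega)).symm,
      (h.far _ _ (by omega) (by omega)).symm, (h.far _ _ (by omega) (by omega)).symm⟩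
  · exact ⟨h.far _ _ (by omega) (by omega), h.far _ _ (by omega) (by omega),
      h.far _ _ (by omega) (by omega), h.far _ _ (by omega) (by omega)⟩
  · exact h.killN_c 3 4 2 rfl rfl (h.dm 4 3 (by simp) (by simp)).kill
      (h.dm 4 4 (by simp) (by simp)).kill (h.dm 1 2 (by simp) (by simp)).kill (Or.inl (ho _))
  · exact killN_mem (by simp)
  · exact h.killN_c 6 7 5 rfl rfl (h.dm 5 6 (by simp) (by simp)).kill
      (h.kill_c 7 8 6 rfl rfl (d8 _ (by simp)) (h.dm 5 6 (by simp) (by simp)) (ho _))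
      (h.dm 5 5 (by simp) (by simp)).kill (Or.inl (ho _))
  · exact h.killN_c 7 8 6 rfl rfl
      (h.kill_c 7 8 6 rfl rfl (d8 _ (by simp)) (h.dm 5 6 (by simp) (by simp)) (ho _))
      (d8 _ (by simp)).kill (h.dm 5 6 (by simp) (by simp)).kill (Or.inl (ho _))

lemma ruleVI10 [Finite V] (h : Str G 10 c) (hG : WellIndumatched G) (ho : ∀ i, ¬ OO G c i) :
    False := by
  have e9 : c 10 = c 0 := h.per 0
  have d9 : ∀ L, c 0 ∈ L → Dm G L (c 9) := fun L hL =>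
    h.dm 10 9 (by rw [e9]; exact hL) (by simp)
  refine exch hG (h.adj 5 : G.Adj (c 5) (c 6)) (h.adj 3 : G.Adj (c 3) (c 4))
    (h.adj 6 : G.Adj (c 6) (c 7)) (h.adj 0 : G.Adj (c 0) (c 1)) ?_ ?_ ?_ ?_ ?_ ?_ ?_ ?_
  · exact ⟨(h.far _ _ (by omega) (by omega)).symm, (h.far _ _ (by omega) (by omega)).symm,
      (h.far _ _ (by omega) (by omega)).symm, (h.far _ _ (by omega) (by omega)).symm⟩
  · exact ⟨(h.far _ _ (by omega) (by omega)).symm, (h.far _ _ (by omega) (by omega)).symm,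
      (h.far _ _ (by omega) (by omega)).symm, (h.far _ _ (by omega) (by omega)).symm⟩
  · exact ⟨(h.far _ _ (by omega) (by omega)).symm, (h.far _ _ (by omega) (by omega)).symm,
      (h.far _ _ (by omega) (by omega)).symm, (h.far _ _ (by omega) (by omega)).symm⟩
  · exact ⟨h.far _ _ (by omega) (by omega), h.far _ _ (by omega) (by omega),
      h.far _ _ (by omega) (by omega), h.far _ _ (by omega) (by omega)⟩
  · exact h.killN_c 3 4 2 rfl rfl
      (h.kill_c 3 4 2 rfl rfl (h.dm 5 4 (by simp) (by simp)) (h.dm 1 2 (by simp) (by simp)) (ho _))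
      (h.dm 5 4 (by simp) (by simp)).kill (h.dm 1 2 (by simp) (by simp)).kill (Or.inl (ho _))
  · exact h.killN_c 4 5 3 rfl rfl (h.dm 5 4 (by simp) (by simp)).kill
      (h.dm 5 5 (by simp) (by simp)).kill
      (h.kill_c 3 4 2 rfl rfl (h.dm 5 4 (by simp) (by simp)) (h.dm 1 2 (by simp) (by simp)) (ho _))
      (Or.inl (ho _))
  · exact killN_mem (by simp)
  · exact h.killN_c 7 8 6 rfl rfl (h.dm 6 7 (by simp) (by simp)).kill
      (h.kill_c 8 9 7 rfl rfl (d9 _ (by simp)) (h.dm 6 7 (by simp) (by simp)) (ho _))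
      (h.dm 6 6 (by simp) (by simp)).kill (Or.inl (ho _))

lemma xx_per (h : Str G n c) (i : ℤ) : XX G c (i + n) ↔ XX G c i := by
  unfold XX; rw [h.per]

lemma oo_per (h : Str G n c) (i : ℤ) : OO G c (i + n) ↔ OO G c i := by
  unfold OO; rw [h.per]

lemma xx_next [Finite V] (h : Str G n c) (hG : WellIndumatched G) (i : ℤ) (hi : XX G c i) :
    ¬ XX G c (i + 1) := by
  intro h1
  exact (h.shift i).ruleI hG ((XX_shift i 0).2 (by simpa using hi)) ((XX_shift i 1).2 h1)

lemma xx_next2 [Finite V] (h : Str G n c) (hG : WellIndumatched G) (i : ℤ) (hi : XX G c i) :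
    XX G c (i + 2) := by
  by_contra h2
  have h1 := h.xx_next hG i hi
  rw [← XX_shift i 1] at h1
  rw [← XX_shift i 2] at h2
  have hi' : XX G (fun j => c (i + j)) 0 := (XX_shift i 0).2 (by simpa using hi)
  by_cases ho : OO G (fun j => c (i + j)) 2
  · exact (h.shift i).ruleIII hG hi'.oo ho h2
  · exact (h.shift i).ruleII hG hi' ho h1

lemma oo_next2 [Finite V] (h : Str G n c) (hG : WellIndumatched G) (hX : ∀ i, ¬ XX G c i)
    (i : ℤ) (hi : OO G c i) : ¬ OO G c (i + 2) := by
  intro h2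
  exact (h.shift i).ruleIII hG ((OO_shift i 0).2 (by simpa using hi)) ((OO_shift i 2).2 h2)
    (fun h => hX _ ((XX_shift i 2).1 h))

lemma oo_next3 [Finite V] (h : Str G n c) (hG : WellIndumatched G) (hX : ∀ i, ¬ XX G c i)
    (i : ℤ) (hi : OO G c i) : OO G c (i + 3) := by
  by_contra h3
  exact (h.shift i).ruleIV hG ((OO_shift i 0).2 (by simpa using hi))
    (fun h' => h.oo_next2 hG hX i hi ((OO_shift i 2).1 h'))
    (fun h' => h3 ((OO_shift i 3).1 h'))

lemma no_xx [Finite V] (h : Str G n c) (hG : WellIndumatched G) (hX : ∀ i, ¬ XX G c i) :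
    n = 11 := by
  by_contra hn
  have h9 := h.nine
  have hO : ∀ i, ¬ OO G c i := by
    intro i hi
    have h3 := h.oo_next3 hG hX i hi
    have h6 := h.oo_next3 hG hX _ h3
    have h9' := h.oo_next3 hG hX _ h6
    have h12 := h.oo_next3 hG hX _ h9'
    by_cases h10 : n = 10
    · subst h10
      apply h.oo_next2 hG hX i hi
      rw [← h.oo_per]
      convert h12 using 1; ring
    by_cases h99 : n = 9
    · subst h99
      refine (h.shift i).ruleV9 hG ((OO_shift i 0).2 (by simpa using hi)) ((OO_shift i 3).2 h3)
        ((OO_shift i 6).2 (by convert h6 using 1; ring)) ?_ ?_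
        (fun h' => hX _ ((XX_shift i 0).1 h')) (fun h' => hX _ ((XX_shift i 3).1 h'))
      · rw [OO_shift]
        intro h4
        apply h.oo_next2 hG hX _ h4
        convert h6 using 1; ring
      · rw [OO_shift, ← h.oo_per]
        have := h.oo_next2 hG hX _ h6
        intro h'
        apply this
        convert h' using 1; ring
    · exact (h.shift i).ruleV11 hG ((OO_shift i 0).2 (by simpa using hi)) ((OO_shift i 3).2 h3)
        (fun h' => hX _ ((XX_shift i 0).1 h')) (fun h' => hX _ ((XX_shift i 3).1 h')) (by omega)
  by_cases h10 : n = 10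
  · subst h10; exact h.ruleVI10 hG hO
  by_cases h99 : n = 9
  · subst h99; exact h.ruleVI9 hG hO
  · exact h.ruleVI12 hG hO (by omega)

end Str

/-! ## Cycles in sun-like graphs -/

lemma cycle_two {V : Type*} {G : SimpleGraph V} {v w : V} {D : G.Walk v v} (hD : D.IsCycle)
    (hw : w ∈ D.support) : ∃ a b, a ≠ b ∧ s(w, a) ∈ D.edges ∧ s(w, b) ∈ D.edges := by
  have := hD.ncard_neighborSet_toSubgraph_eq_two hw
  obtain ⟨a, b, hab, h⟩ := Set.ncard_eq_two.1 this
  refine ⟨a, b, hab, ?_, ?_⟩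
  · rw [← Walk.adj_toSubgraph_iff_mem_edges, ← Subgraph.mem_neighborSet, h]; simp
  · rw [← Walk.adj_toSubgraph_iff_mem_edges, ← Subgraph.mem_neighborSet, h]; simp

lemma cycle_pair {V : Type*} {G : SimpleGraph V} {v w : V} {D : G.Walk v v} (hD : D.IsCycle)
    (hw : w ∈ D.support) {a b : V} (h : ∀ t, s(w, t) ∈ D.edges → t = a ∨ t = b) :
    s(w, a) ∈ D.edges ∧ s(w, b) ∈ D.edges := by
  obtain ⟨a', b', hne, h1, h2⟩ := cycle_two hD hw
  rcases h _ h1 with rfl | rfl <;> rcases h _ h2 with rfl | rfl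
  · exact (hne rfl).elim
  · exact ⟨h1, h2⟩
  · exact ⟨h2, h1⟩
  · exact (hne rfl).elim

lemma Cyc.not_acyclic {V : Type*} {G : SimpleGraph V} {n : ℤ} {c : ℤ → V} (h : Cyc G n c) :
    ¬ G.IsAcyclic := by
  intro hac
  have h3 := h.three
  obtain ⟨p, hp, hl, -⟩ := h.arc 0 (n - 1).toNat (by omega)
  have e : c (0 + ((n - 1).toNat : ℤ)) = c (0 - 1) := by
    rw [← h.per (0 - 1)]; congr 1; omega
  have ha : G.Adj (c 0) (c (0 + ((n - 1).toNat : ℤ))) := by rw [e]; exact h.adj' 0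
  have := hac.path_unique ⟨p, hp⟩ ⟨ha.toWalk, Walk.IsPath.cons (by simp) (by
    simp only [Walk.support_nil, List.mem_singleton]; exact ha.ne)⟩
  have h2 := congrArg (fun x : G.Path _ _ => x.1.length) this
  simp [hl] at h2
  omega

lemma ring_edges {V : Type*} {G : SimpleGraph V} {n : ℤ} {c : ℤ → V} (h : Cyc G n c)
    (hn : ∀ i j, G.Adj (c i) (c j) → c j = c (i + 1) ∨ c j = c (i - 1))
    {v : V} {D : G.Walk v v} (hD : D.IsCycle) (hs : ∀ w ∈ D.support, ∃ j, w = c j) (e : Sym2 V) :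
    e ∈ D.edges ↔ ∃ i, e = s(c i, c (i + 1)) := by
  have key : ∀ i, c i ∈ D.support → s(c i, c (i + 1)) ∈ D.edges ∧ s(c i, c (i - 1)) ∈ D.edges := by
    intro i hi
    apply cycle_pair hD hi
    intro t ht
    obtain ⟨j, rfl⟩ := hs t (D.snd_mem_support_of_mem_edges ht)
    exact hn i j (D.adj_of_mem_edges ht)
  obtain ⟨j, hj⟩ := hs v D.start_mem_support
  have all : ∀ m : ℤ, c (j + m) ∈ D.support := by
    intro m
    induction m using Int.induction_on with
    | zero => rw [add_zero, ← hj]; exact D.start_mem_support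
    | succ k ih =>
      have := D.snd_mem_support_of_mem_edges (key _ ih).1
      rwa [add_assoc] at this
    | pred k ih =>
      have := D.snd_mem_support_of_mem_edges (key _ ih).2
      rwa [add_sub_assoc] at this
  constructor
  · induction e with
    | _ a b =>
      intro he
      obtain ⟨i, rfl⟩ := hs a (D.fst_mem_support_of_mem_edges he)
      obtain ⟨j, rfl⟩ := hs b (D.snd_mem_support_of_mem_edges he)
      rcases hn i j (D.adj_of_mem_edges he) with h1 | h1
      · exact ⟨i, by rw [h1]⟩
      · exact ⟨i - 1, by rw [h1, Sym2.eq_swap]; simp⟩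
  · rintro ⟨i, rfl⟩
    have := all (i - j)
    rw [add_sub_cancel] at this
    exact (key i this).1

lemma length_of_edges {V : Type*} {G : SimpleGraph V} {v w : V} {C : G.Walk v v} {D : G.Walk w w}
    (hC : C.IsCycle) (hD : D.IsCycle) (h : ∀ e, e ∈ D.edges ↔ e ∈ C.edges) :
    D.length = C.length := by
  have := ((List.perm_ext_iff_of_nodup hD.edges_nodup hC.edges_nodup).2 h).length_eq
  simpa using this

/-- All the structure of a sun-like graph of type `(i)/(ii)`. -/
structure Sun {V : Type*} (G : SimpleGraph V) (k : ℕ) (c x y : ℤ → V) : Prop where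
  cyc : Cyc G (2 * k) c
  five : 5 ≤ k
  even_nbr : ∀ m w, G.Adj (c (2 * m)) w → w = c (2 * m + 1) ∨ w = c (2 * m - 1)
  odd_nbr : ∀ m w, G.Adj (c (2 * m + 1)) w ↔ w = c (2 * m + 2) ∨ w = c (2 * m) ∨ w = x m
  x_nbr : ∀ m w, G.Adj (x m) w ↔ w = c (2 * m + 1) ∨ w = y m
  y_nbr : ∀ m w, G.Adj (y m) w ↔ w = x m
  offx : ∀ m, Off c (x m)
  offy : ∀ m, Off c (y m)
  cover : ∀ v, (∃ m, v = c (2 * m)) ∨ (∃ m, v = c (2 * m + 1)) ∨ (∃ m, v = x m) ∨ ∃ m, v = y m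

namespace Sun

variable {V : Type*} {G : SimpleGraph V} {k : ℕ} {c x y : ℤ → V}

lemma edges (h : Sun G k c x y) {v : V} {D : G.Walk v v} (hD : D.IsCycle) (e : Sym2 V) :
    e ∈ D.edges ↔ ∃ i, e = s(c i, c (i + 1)) := by
  refine ring_edges h.cyc ?_ hD ?_ e
  · intro i j hij
    rcases Int.even_or_odd' i with ⟨m, rfl | rfl⟩
    · exact h.even_nbr m _ hij
    · rcases (h.odd_nbr m _).1 hij with h1 | h1 | h1
      · left; rw [h1]; congr 1; ring
      · right; rw [h1]; congr 1; ring
      · exact (h.offx m j h1.symm).elim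
  · have hy : ∀ m, y m ∉ D.support := by
      intro m hm
      obtain ⟨a, b, hne, h1, h2⟩ := cycle_two hD hm
      exact hne (((h.y_nbr m _).1 (D.adj_of_mem_edges h1)).trans
        ((h.y_nbr m _).1 (D.adj_of_mem_edges h2)).symm)
    have hx : ∀ m, x m ∉ D.support := by
      intro m hm
      have := (cycle_pair hD hm (fun t ht => (h.x_nbr m t).1 (D.adj_of_mem_edges ht))).2
      exact hy m (D.snd_mem_support_of_mem_edges this)
    intro w hw
    rcases h.cover w with ⟨m, rfl⟩ | ⟨m, rfl⟩ | ⟨m, rfl⟩ | ⟨m, rfl⟩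
    · exact ⟨_, rfl⟩
    · exact ⟨_, rfl⟩
    · exact (hx m hw).elim
    · exact (hy m hw).elim

lemma ne (h : Sun G k c x y) (i j : ℤ) (h1 : i ≠ j) (h2 : j < i + 10) (h3 : i < j + 10) :
    c i ≠ c j := by
  intro he
  have := h.five
  exact h1 (h.cyc.inj _ _ he (by omega) (by omega))

lemma reduced (h : Sun G k c x y) : Reduced G := by
  intro v w hvw
  have hN : ∀ t, G.Adj v t ↔ G.Adj w t := fun t => by
    rw [← mem_neighborSet, hvw, mem_neighborSet]
  have h5 := h.five
  rcases h.cover v with ⟨m, rfl⟩ | ⟨m, rfl⟩ | ⟨m, rfl⟩ | ⟨m, rfl⟩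
  · have a1 : G.Adj (c (2 * m + 1)) w := ((hN _).1 (h.cyc.adj _)).symm
    have a2 : G.Adj w (c (2 * m - 1)) := (hN _).1 (h.cyc.adj' _)
    rcases (h.odd_nbr _ _).1 a1 with rfl | rfl | rfl
    · exfalso
      rw [show 2 * m + 2 = 2 * (m + 1) by ring] at a2
      rcases h.even_nbr _ _ a2 with h1 | h1
      · exact h.ne _ _ (by omega) (by omega) (by omega) h1
      · exact h.ne _ _ (by omega) (by omega) (by omega) h1
    · rfl
    · exfalso
      rcases (h.x_nbr _ _).1 a2 with h1 | h1
      · exact h.ne _ _ (by omega) (by omega) (by omega) h1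
      · exact h.offy _ _ h1.symm
  · have a1 : G.Adj (c (2 * (m + 1))) w := by
      have := ((hN _).1 (h.cyc.adj _)).symm
      rwa [show 2 * m + 1 + 1 = 2 * (m + 1) by ring] at this
    have a2 : G.Adj (c (2 * m)) w := by
      have := ((hN _).1 (h.cyc.adj' _)).symm
      rwa [show 2 * m + 1 - 1 = 2 * m by ring] at this
    rcases h.even_nbr _ _ a2 with h2 | h2
    · exact h2.symm
    · exfalso
      rcases h.even_nbr _ _ a1 with h1 | h1
      · exact h.ne _ _ (by omega) (by omega) (by omega) (h2.symm.trans h1)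
      · exact h.ne _ _ (by omega) (by omega) (by omega) (h2.symm.trans h1)
  · have a1 : G.Adj w (y m) := (hN _).1 ((h.x_nbr _ _).2 (Or.inr rfl))
    exact ((h.y_nbr _ _).1 a1.symm).symm
  · have a1 : G.Adj w (x m) := (hN _).1 ((h.y_nbr _ _).2 rfl)
    rcases (h.x_nbr _ _).1 a1.symm with rfl | rfl
    · exfalso
      have := (hN _).2 (h.cyc.adj _)
      exact h.offx _ _ ((h.y_nbr _ _).1 this).symm
    · rfl

lemma adj_cx (h : Sun G k c x y) (m : ℤ) : G.Adj (c (2 * m + 1)) (x m) :=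
  (h.odd_nbr _ _).2 (Or.inr (Or.inr rfl))

lemma adj_xy (h : Sun G k c x y) (m : ℤ) : G.Adj (x m) (y m) :=
  (h.x_nbr _ _).2 (Or.inr rfl)

lemma connected (h : Sun G k c x y) : G.Connected := by
  have hc : ∀ i, G.Reachable (c 0) (c i) := by
    intro i
    induction i using Int.induction_on with
    | zero => exact Reachable.refl _
    | succ k ih => exact ih.trans (h.cyc.adj _).reachable
    | pred k ih => exact ih.trans (h.cyc.adj' _).reachable
  have hx : ∀ m, G.Reachable (c 0) (x m) := fun m => (hc _).trans (h.adj_cx m).reachable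
  have hv : ∀ v, G.Reachable (c 0) v := by
    intro v
    rcases h.cover v with ⟨m, rfl⟩ | ⟨m, rfl⟩ | ⟨m, rfl⟩ | ⟨m, rfl⟩
    · exact hc _
    · exact hc _
    · exact hx _
    · exact (hx m).trans (h.adj_xy m).reachable
  have : Nonempty V := ⟨c 0⟩
  exact ⟨fun a b => (hv a).symm.trans (hv b)⟩

end Sun

lemma supp_subset {V : Type*} {H : SimpleGraph V} {v : V} {S : Set V} (hv : v ∈ S)
    (hS : ∀ a ∈ S, ∀ b, H.Adj a b → b ∈ S) : (H.connectedComponentMk v).supp ⊆ S := by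
  intro w hw
  rw [ConnectedComponent.mem_supp_iff, ConnectedComponent.eq] at hw
  obtain ⟨p⟩ := hw.symm
  clear hw
  induction p with
  | nil => exact hv
  | cons h p ih => exact ih (hS _ hv _ h)

lemma mem_supp_of_adj {V : Type*} {H : SimpleGraph V} {v a b : V}
    (ha : a ∈ (H.connectedComponentMk v).supp) (hab : H.Adj a b) :
    b ∈ (H.connectedComponentMk v).supp :=
  (H.connectedComponentMk v).mem_supp_of_adj_mem_supp ha hab

namespace Sun

variable {V : Type*} {G : SimpleGraph V} {k : ℕ} {c x y : ℤ → V}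

lemma typeI (h : Sun G k c x y) {S : Set (Sym2 V)} (hS : ∀ e, e ∈ S ↔ ∃ i, e = s(c i, c (i + 1)))
    (m : ℤ) : TypeI (G.deleteEdges S) (c (2 * m)) := by
  unfold TypeI
  apply Set.Subset.antisymm
  · apply supp_subset (S := {c (2 * m)}) rfl
    rintro a rfl b hab
    rw [deleteEdges_adj] at hab
    exfalso
    apply hab.2
    rw [hS]
    rcases h.even_nbr _ _ hab.1 with rfl | rfl
    · exact ⟨_, rfl⟩
    · exact ⟨2 * m - 1, by rw [Sym2.eq_swap]; simp⟩
  · rintro a rfl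
    rfl

lemma typeII (h : Sun G k c x y) {S : Set (Sym2 V)} (hS : ∀ e, e ∈ S ↔ ∃ i, e = s(c i, c (i + 1)))
    (m : ℤ) : TypeII (G.deleteEdges S) (c (2 * m + 1)) := by
  have hcS : ∀ i, s(c i, c (i + 1)) ∈ S := fun i => (hS _).2 ⟨i, rfl⟩
  have hoff : ∀ a b, (Off c a) → s(a, b) ∉ S := by
    intro a b ha hab
    obtain ⟨i, hi⟩ := (hS _).1 hab
    rcases Sym2.eq_iff.1 hi with ⟨h1, -⟩ | ⟨h1, -⟩
    · exact ha _ h1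
    · exact ha _ h1
  have hcx : (G.deleteEdges S).Adj (c (2 * m + 1)) (x m) := by
    rw [deleteEdges_adj]
    exact ⟨h.adj_cx m, by rw [Sym2.eq_swap]; exact hoff _ _ (h.offx m)⟩
  have hxy : (G.deleteEdges S).Adj (x m) (y m) := by
    rw [deleteEdges_adj]
    exact ⟨h.adj_xy m, hoff _ _ (h.offx m)⟩
  refine ⟨x m, y m, (h.adj_xy m).ne, (h.offx m _).symm, (h.offy m _).symm, ?_, hcx, hxy, ?_⟩
  · apply Set.Subset.antisymm
    · apply supp_subset (by simp)
      rintro a (rfl | rfl | rfl) b hab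
      · rw [deleteEdges_adj] at hab
        rcases (h.odd_nbr _ _).1 hab.1 with rfl | rfl | rfl
        · exact (hab.2 (by
            have := hcS (2 * m + 1); rwa [show 2 * m + 1 + 1 = 2 * m + 2 by ring] at this)).elim
        · exact (hab.2 (by rw [Sym2.eq_swap]; exact hcS _)).elim
        · simp
      · rcases (h.x_nbr _ _).1 hab.1 with rfl | rfl <;> simp
      · have := (h.y_nbr _ _).1 hab.1
        subst this; simp
    · rintro a (rfl | rfl | rfl)
      · rfl
      · exact mem_supp_of_adj rfl hcx
      · exact mem_supp_of_adj (mem_supp_of_adj rfl hcx) hxy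
  · intro hc
    exact h.offx _ _ ((h.y_nbr _ _).1 hc.1.symm).symm

end Sun

/-- The right hand side of the theorem, second alternative. -/
def RHS2 {V : Type*} (G : SimpleGraph V) : Prop :=
  Reduced G ∧ G.Connected ∧
        ∃ g : ℕ, 10 ≤ g ∧ Even g ∧ G.girth = g ∧
          ∃ (v : V) (C : G.Walk v v), C.IsCycle ∧ C.length = g ∧
            (∀ (w : V) (D : G.Walk w w), D.IsCycle → ∀ e, e ∈ D.edges ↔ e ∈ C.edges) ∧
            ∀ i < g,
              (TypeI (G.deleteEdges {e | e ∈ C.edges}) (C.getVert i) ∧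
                TypeII (G.deleteEdges {e | e ∈ C.edges}) (C.getVert (i + 1))) ∨
              (TypeII (G.deleteEdges {e | e ∈ C.edges}) (C.getVert i) ∧
                TypeI (G.deleteEdges {e | e ∈ C.edges}) (C.getVert (i + 1)))

lemma Sun.rhs {V : Type*} {G : SimpleGraph V} {k : ℕ} {c x y : ℤ → V} (h : Sun G k c x y)
    {v : V} (C : G.Walk v v) (hC : C.IsCycle) (hl : C.length = 2 * k) (hg : G.girth = C.length)
    (s : ℤ) (hs : ∀ j, cz C j = c (j + s)) : RHS2 G := by
  have h5 := h.five
  refine ⟨h.reduced, h.connected, 2 * k, by omega, ⟨k, by ring⟩, by omega, v, C, hC, hl, ?_, ?_⟩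
  · intro w D hD e
    rw [h.edges hD, h.edges hC]
  · intro i hi
    have hS : ∀ e, e ∈ {e | e ∈ C.edges} ↔ ∃ i, e = s(c i, c (i + 1)) := fun e => h.edges hC e
    rw [← cz_nat C (by omega), ← cz_nat C (by omega), hs, hs]
    rcases Int.even_or_odd' ((i : ℤ) + s) with ⟨m, hm | hm⟩
    · left
      rw [hm, show ((i + 1 : ℕ) : ℤ) + s = 2 * m + 1 by push_cast; linarith]
      exact ⟨h.typeI hS m, h.typeII hS m⟩
    · right
      rw [hm, show ((i + 1 : ℕ) : ℤ) + s = 2 * (m + 1) by push_cast; linarith]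
      exact ⟨h.typeII hS m, h.typeI hS _⟩

/-! ## The model graph -/

def FR (k : ℕ) (a b : ZMod k × Fin 4) : Prop :=
  (a.2 = 1 ∧ b.2 = 0 ∧ (b.1 = a.1 ∨ b.1 = a.1 + 1)) ∨ (a.2 = 1 ∧ b.2 = 2 ∧ b.1 = a.1) ∨
    (a.2 = 2 ∧ b.2 = 3 ∧ b.1 = a.1)

/-- The sun graph with cycle of length `2 * k`. -/
def FG (k : ℕ) : SimpleGraph (ZMod k × Fin 4) where
  Adj a b := FR k a b ∨ FR k b a
  symm := ⟨fun _ _ h => h.symm⟩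
  loopless := ⟨fun a h => by
    rcases h with h | h <;> rcases h with ⟨h1, h2, -⟩ | ⟨h1, h2, -⟩ | ⟨h1, h2, -⟩ <;>
      rw [h1] at h2 <;> exact absurd h2 (by decide)⟩

lemma FG_adj {k : ℕ} {a b : ZMod k × Fin 4} : (FG k).Adj a b ↔ FR k a b ∨ FR k b a := Iff.rfl

lemma FG_adj0 {k : ℕ} (i : ZMod k) (w : ZMod k × Fin 4) :
    (FG k).Adj (i, 0) w ↔ w = (i, 1) ∨ w = (i - 1, 1) := by
  obtain ⟨j, t⟩ := w
  rw [FG_adj]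
  unfold FR
  simp only [Prod.mk.injEq]
  have : i = j + 1 ↔ j = i - 1 := ⟨fun h => by rw [h]; ring, fun h => by rw [h]; ring⟩
  fin_cases t <;> simp <;> tauto

lemma FG_adj1 {k : ℕ} (i : ZMod k) (w : ZMod k × Fin 4) :
    (FG k).Adj (i, 1) w ↔ w = (i + 1, 0) ∨ w = (i, 0) ∨ w = (i, 2) := by
  obtain ⟨j, t⟩ := w
  rw [FG_adj]
  unfold FR
  simp only [Prod.mk.injEq]
  fin_cases t <;> simp <;> tauto

lemma FG_adj2 {k : ℕ} (i : ZMod k) (w : ZMod k × Fin 4) :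
    (FG k).Adj (i, 2) w ↔ w = (i, 1) ∨ w = (i, 3) := by
  obtain ⟨j, t⟩ := w
  rw [FG_adj]
  unfold FR
  simp only [Prod.mk.injEq]
  fin_cases t <;> simp <;> tauto

lemma FG_adj3 {k : ℕ} (i : ZMod k) (w : ZMod k × Fin 4) :
    (FG k).Adj (i, 3) w ↔ w = (i, 2) := by
  obtain ⟨j, t⟩ := w
  rw [FG_adj]
  unfold FR
  simp only [Prod.mk.injEq]
  fin_cases t <;> simp <;> tauto

/-- cyclic coordinates in the model graph -/
def cf (k : ℕ) (j : ℤ) : ZMod k × Fin 4 :=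
  if j % 2 = 0 then (((j / 2 : ℤ) : ZMod k), 0) else (((j / 2 : ℤ) : ZMod k), 1)

lemma cf_even (k : ℕ) (m : ℤ) : cf k (2 * m) = ((m : ZMod k), 0) := by
  unfold cf; simp

lemma cf_odd (k : ℕ) (m : ℤ) : cf k (2 * m + 1) = ((m : ZMod k), 1) := by
  unfold cf
  rw [if_neg (by omega), show (2 * m + 1) / 2 = m by omega]

lemma sun_FG (k : ℕ) (hk : 5 ≤ k) :
    Sun (FG k) k (cf k) (fun m => ((m : ZMod k), 2)) (fun m => ((m : ZMod k), 3)) := by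
  have hadj : ∀ i, (FG k).Adj (cf k i) (cf k (i + 1)) := by
    intro i
    rcases Int.even_or_odd' i with ⟨m, rfl | rfl⟩
    · rw [cf_even, cf_odd, FG_adj0]; simp
    · rw [cf_odd, show 2 * m + 1 + 1 = 2 * (m + 1) by ring, cf_even, FG_adj1]; simp
  refine ⟨⟨by omega, ?_, ?_, hadj⟩, hk, ?_, ?_, ?_, ?_, ?_, ?_, ?_⟩
  · intro i
    rcases Int.even_or_odd' i with ⟨m, rfl | rfl⟩
    · rw [← mul_add, cf_even, cf_even]; simp
    · rw [show 2 * m + 1 + 2 * (k : ℤ) = 2 * (m + k) + 1 by ring, cf_odd, cf_odd]; simp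
  · have key : ∀ m m' : ℤ, (m : ZMod k) = m' → m < m' + k → m' < m + k → m = m' := by
      intro m m' h h1 h2
      rw [ZMod.intCast_eq_intCast_iff_dvd_sub] at h
      have := Int.eq_zero_of_abs_lt_dvd h (by rw [abs_lt]; constructor <;> omega)
      omega
    intro i j h h1 h2
    rcases Int.even_or_odd' i with ⟨m, rfl | rfl⟩ <;>
      rcases Int.even_or_odd' j with ⟨m', rfl | rfl⟩ <;>
      simp only [cf_even, cf_odd, Prod.mk.injEq] at h
    · rw [key m m' h.1 (by omega) (by omega)]
    · exact absurd h.2 (by decide)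
    · exact absurd h.2 (by decide)
    · rw [key m m' h.1 (by omega) (by omega)]
  · intro m w
    rw [cf_even, cf_odd, show 2 * m - 1 = 2 * (m - 1) + 1 by ring, cf_odd, FG_adj0]
    push_cast; exact id
  · intro m w
    rw [cf_even, cf_odd, show 2 * m + 2 = 2 * (m + 1) by ring, cf_even, FG_adj1]
    push_cast; exact Iff.rfl
  · intro m w
    rw [cf_odd, FG_adj2]
  · intro m w
    rw [FG_adj3]
  · intro m j h
    unfold cf at h
    split_ifs at h <;> exact absurd (Prod.mk.inj h).2 (by decide)
  · intro m j h
    unfold cf at h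
    split_ifs at h <;> exact absurd (Prod.mk.inj h).2 (by decide)
  · rintro ⟨i, t⟩
    obtain ⟨m, rfl⟩ := ZMod.intCast_surjective i
    fin_cases t
    · left; exact ⟨m, (cf_even k m).symm⟩
    · right; left; exact ⟨m, (cf_odd k m).symm⟩
    · right; right; left; exact ⟨m, rfl⟩
    · right; right; right; exact ⟨m, rfl⟩

lemma Sun.map {V W : Type*} {F : SimpleGraph W} {G : SimpleGraph V} (e : F ≃g G) {k : ℕ}
    {c x y : ℤ → W} (h : Sun F k c x y) :
    Sun G k (fun i => e (c i)) (fun i => e (x i)) (fun i => e (y i)) := by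
  have key : ∀ a w, G.Adj (e a) w ↔ F.Adj a (e.symm w) := by
    intro a w
    rw [← e.map_adj_iff (v := a), e.apply_symm_apply]
  have key2 : ∀ a w, e.symm w = a ↔ w = e a := by
    intro a w
    constructor
    · rintro rfl; simp
    · rintro rfl; simp
  refine ⟨⟨h.cyc.three, fun i => ?_, fun i j hij => h.cyc.inj i j (e.injective hij),
    fun i => e.map_adj_iff.2 (h.cyc.adj i)⟩, h.five, ?_, ?_, ?_, ?_, ?_, ?_, ?_⟩
  · rw [h.cyc.per]
  · intro m w hw
    rw [key] at hw
    have := h.even_nbr _ _ hw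
    rwa [key2, key2] at this
  · intro m w
    rw [key, h.odd_nbr, key2, key2, key2]
  · intro m w
    rw [key, h.x_nbr, key2, key2]
  · intro m w
    rw [key, h.y_nbr, key2]
  · intro m j hj; exact h.offx m j (e.injective hj)
  · intro m j hj; exact h.offy m j (e.injective hj)
  · intro v
    rcases h.cover (e.symm v) with ⟨m, h⟩ | ⟨m, h⟩ | ⟨m, h⟩ | ⟨m, h⟩ <;> rw [key2] at h
    · exact Or.inl ⟨m, h⟩
    · exact Or.inr (Or.inl ⟨m, h⟩)
    · exact Or.inr (Or.inr (Or.inl ⟨m, h⟩))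
    · exact Or.inr (Or.inr (Or.inr ⟨m, h⟩))

lemma FR_fst {k : ℕ} {a b : ZMod k × Fin 4} (h : FR k a b) : a = (a.1, 1) ∨ a = (a.1, 2) := by
  obtain ⟨i, t⟩ := a
  rcases h with ⟨h, -⟩ | ⟨h, -⟩ | ⟨h, -⟩ <;> simp only at h <;> subst h <;> simp

lemma FR_snd {k : ℕ} {a b : ZMod k × Fin 4} (h : FR k a b) {j : ZMod k}
    (hb : (j, 1) = b ∨ (j, 2) = b) : j = a.1 := by
  rcases hb with rfl | rfl <;> rcases h with ⟨-, h, h'⟩ | ⟨-, h, h'⟩ | ⟨-, h, h'⟩ <;>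
    simp at h h'
  exact h'

/-- `e` meets the `i`-th pair -/
def gr {k : ℕ} (e : Sym2 (ZMod k × Fin 4)) (i : ZMod k) : Prop := (i, 1) ∈ e ∨ (i, 2) ∈ e

lemma FG_edge {k : ℕ} {e : Sym2 (ZMod k × Fin 4)} (he : e ∈ (FG k).edgeSet) :
    ∃ a b, e = s(a, b) ∧ FR k a b := by
  induction e with
  | _ a b =>
    rcases he with h | h
    · exact ⟨a, b, rfl, h⟩
    · exact ⟨b, a, Sym2.eq_swap, h⟩

lemma gr_exists {k : ℕ} {e : Sym2 (ZMod k × Fin 4)} (he : e ∈ (FG k).edgeSet) : ∃ i, gr e i := by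
  obtain ⟨a, b, rfl, h⟩ := FG_edge he
  refine ⟨a.1, ?_⟩
  unfold gr
  rcases FR_fst h with h | h <;> rw [← h] <;> simp

lemma gr_unique {k : ℕ} {e : Sym2 (ZMod k × Fin 4)} (he : e ∈ (FG k).edgeSet) {i j : ZMod k}
    (hi : gr e i) (hj : gr e j) : i = j := by
  obtain ⟨a, b, rfl, h⟩ := FG_edge he
  have key : ∀ i, gr s(a, b) i → i = a.1 := by
    intro i hi
    unfold gr at hi
    simp only [Sym2.mem_iff] at hi
    rcases hi with (h1 | h1) | (h1 | h1)
    · rw [← h1]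
    · exact FR_snd h (Or.inl h1)
    · rw [← h1]
    · exact FR_snd h (Or.inr h1)
  rw [key i hi, key j hj]

lemma gr_conf {k : ℕ} {e f : Sym2 (ZMod k × Fin 4)} {i : ZMod k} (he : gr e i) (hf : gr f i) :
    Conf (FG k) e f := by
  have h : (FG k).Adj (i, 1) (i, 2) := by rw [FG_adj1]; simp
  rcases he with he | he <;> rcases hf with hf | hf
  · exact ⟨_, he, _, hf, Or.inl rfl⟩
  · exact ⟨_, he, _, hf, Or.inr h⟩
  · exact ⟨_, he, _, hf, Or.inr h.symm⟩
  · exact ⟨_, he, _, hf, Or.inl rfl⟩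

lemma wi_FG (k : ℕ) : WellIndumatched (FG k) := by
  have key : ∀ M, IsMaximalInducedMatching (FG k) M → M.ncard = Nat.card (ZMod k) := by
    intro M hM
    rw [isMIM_iff, isIM_iff] at hM
    obtain ⟨⟨h1, h2⟩, h3⟩ := hM
    have hex : ∀ i : ZMod k, ∃ f ∈ M, gr f i := by
      intro i
      obtain ⟨f, hf, u, hu, v, hv, huv⟩ := h3 s((i, 2), (i, 3)) (by
        change (FG k).Adj _ _
        rw [FG_adj2]; simp)
      refine ⟨f, hf, ?_⟩
      have h33 : (i, 3) ∈ f → gr f i := by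
        intro hv
        obtain ⟨d, rfl⟩ := Sym2.mem_iff_exists.1 hv
        have := h1 hf
        have := (FG_adj3 i d).1 this
        subst this
        right; simp
      simp only [Sym2.mem_iff] at hu
      rcases hu with rfl | rfl
      · rcases huv with rfl | huv
        · exact Or.inr hv
        · rcases (FG_adj2 _ _).1 huv with rfl | rfl
          · exact Or.inl hv
          · exact h33 hv
      · rcases huv with rfl | huv
        · exact h33 hv
        · rw [FG_adj3] at huv
          subst huv
          exact Or.inr hv
    choose f hf hgr using hex
    have hinj : Function.Injective f := by
      intro i j hij
      exact gr_unique (h1 (hf i)) (hgr i) (hij ▸ hgr j)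
    have hM : M = f '' Set.univ := by
      ext e
      constructor
      · intro he
        obtain ⟨i, hi⟩ := gr_exists (h1 he)
        exact ⟨i, trivial, h2 _ (hf i) _ he (gr_conf (hgr i) hi)⟩
      · rintro ⟨i, -, rfl⟩
        exact hf i
    rw [hM, Set.ncard_image_of_injective _ hinj, Set.ncard_univ]
  intro M N hM hN
  rw [key M hM, key N hN]

lemma exists_hom {V : Type*} {G : SimpleGraph V} {k : ℕ} {c x y : ℤ → V} (h : Cyc G (2 * k) c)
    (hx : ∀ m, Off c (x m)) (hy : ∀ m, Off c (y m)) (hcx : ∀ m, G.Adj (c (2 * m + 1)) (x m))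
    (hxy : ∀ m, G.Adj (x m) (y m)) (nx : ∀ m t, G.Adj (x m) t → t = c (2 * m + 1) ∨ Off c t)
    (ny : ∀ m t, G.Adj (y m) t → t = x m) :
    ∃ φ : FG k →g G, Function.Injective φ ∧ (∀ m : ℤ, φ ((m : ZMod k), 0) = c (2 * m)) ∧
      (∀ m : ℤ, φ ((m : ZMod k), 1) = c (2 * m + 1)) ∧
      (∀ i : ZMod k, φ (i, 2) = x (ZMod.cast i)) ∧ (∀ i : ZMod k, φ (i, 3) = y (ZMod.cast i)) := by
  have hl : ∀ m : ℤ, (k : ℤ) ∣ ZMod.cast (m : ZMod k) - m := by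
    intro m
    rw [← ZMod.intCast_eq_intCast_iff_dvd_sub, ZMod.intCast_zmod_cast]
  have c0 : ∀ m : ℤ, c (2 * ZMod.cast (m : ZMod k)) = c (2 * m) := by
    intro m
    rw [h.eq_iff, ← mul_sub]
    exact mul_dvd_mul_left 2 (hl m)
  have c1 : ∀ m : ℤ, c (2 * ZMod.cast (m : ZMod k) + 1) = c (2 * m + 1) := by
    intro m
    rw [h.eq_iff, show 2 * (ZMod.cast (m : ZMod k) : ℤ) + 1 - (2 * m + 1)
      = 2 * (ZMod.cast (m : ZMod k) - m) by ring]
    exact mul_dvd_mul_left 2 (hl m)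
  let f : ZMod k × Fin 4 → V := fun a =>
    if a.2 = 0 then c (2 * ZMod.cast a.1) else if a.2 = 1 then c (2 * ZMod.cast a.1 + 1)
    else if a.2 = 2 then x (ZMod.cast a.1) else y (ZMod.cast a.1)
  have f0 : ∀ i, f (i, 0) = c (2 * ZMod.cast i) := fun i => rfl
  have f1 : ∀ i, f (i, 1) = c (2 * ZMod.cast i + 1) := fun i => rfl
  have f2 : ∀ i, f (i, 2) = x (ZMod.cast i) := fun i => rfl
  have f3 : ∀ i, f (i, 3) = y (ZMod.cast i) := fun i => rfl
  have hR : ∀ a b, FR k a b → G.Adj (f a) (f b) := by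
    rintro ⟨i, s⟩ ⟨j, t⟩ hab
    obtain ⟨m, rfl⟩ := ZMod.intCast_surjective i
    rcases hab with ⟨h1, h2, h3 | h3⟩ | ⟨h1, h2, h3⟩ | ⟨h1, h2, h3⟩ <;> simp only at h1 h2 h3 <;>
      subst h1 h2 h3
    · rw [f0, f1]; exact (h.adj _).symm
    · rw [f0, f1, c1]
      have e := c0 (m + 1)
      push_cast at e
      rw [e]
      have := h.adj (2 * m + 1)
      rwa [show 2 * m + 1 + 1 = 2 * (m + 1) by ring] at this
    · rw [f1, f2]; exact hcx _
    · rw [f2, f3]; exact hxy _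
  have dvd_eq : ∀ i j : ZMod k, (2 * (k : ℤ)) ∣ 2 * (ZMod.cast i - ZMod.cast j) → i = j := by
    intro i j hd
    have := Int.dvd_of_mul_dvd_mul_left (by norm_num) hd
    rw [← ZMod.intCast_eq_intCast_iff_dvd_sub, ZMod.intCast_zmod_cast, ZMod.intCast_zmod_cast] at this
    exact this.symm
  have inj1 : ∀ i j : ZMod k, c (2 * ZMod.cast i + 1) = c (2 * ZMod.cast j + 1) → i = j := by
    intro i j hij
    rw [h.eq_iff] at hij
    apply dvd_eq
    convert hij using 1; ring
  have injx : ∀ i j : ZMod k, x (ZMod.cast i) = x (ZMod.cast j) → i = j := by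
    intro i j hij
    have := hcx (ZMod.cast j)
    rw [← hij] at this
    rcases nx _ _ this.symm with h1 | h1
    · exact (inj1 j i h1).symm
    · exact (h1 _ rfl).elim
  have nxy : ∀ m m', x m ≠ y m' := by
    intro m m' he
    have := hcx m
    rw [he] at this
    exact hx m' _ (ny _ _ this.symm).symm
  have par : ∀ m m' : ℤ, c (2 * m) ≠ c (2 * m' + 1) := by
    intro m m' he
    rw [h.eq_iff] at he
    obtain ⟨d, hd⟩ := he
    have : 2 * (m - m' - k * d) = 1 := by linarith
    omega
  have hinj : Function.Injective f := by
    rintro ⟨i, s⟩ ⟨j, t⟩ hab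
    have hs : s = 0 ∨ s = 1 ∨ s = 2 ∨ s = 3 := by fin_cases s <;> simp
    have ht : t = 0 ∨ t = 1 ∨ t = 2 ∨ t = 3 := by fin_cases t <;> simp
    rcases hs with rfl | rfl | rfl | rfl <;> rcases ht with rfl | rfl | rfl | rfl <;>
      simp only [f0, f1, f2, f3] at hab
    · rw [h.eq_iff, ← mul_sub] at hab; rw [dvd_eq _ _ hab]
    · exact (par _ _ hab).elim
    · exact (hx _ _ hab.symm).elim
    · exact (hy _ _ hab.symm).elim
    · exact (par _ _ hab.symm).elim
    · rw [inj1 _ _ hab]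
    · exact (hx _ _ hab.symm).elim
    · exact (hy _ _ hab.symm).elim
    · exact (hx _ _ hab).elim
    · exact (hx _ _ hab).elim
    · rw [injx _ _ hab]
    · exact (nxy _ _ hab).elim
    · exact (hy _ _ hab).elim
    · exact (hy _ _ hab).elim
    · exact (nxy _ _ hab.symm).elim
    · have := hxy (ZMod.cast i)
      rw [hab] at this
      rw [injx _ _ (ny _ _ this.symm)]
  refine ⟨⟨f, fun {a b} hab => ?_⟩, hinj, fun m => ?_, fun m => ?_, f2, f3⟩
  · rcases hab with hab | hab
    · exact hR a b hab
    · exact (hR b a hab).symm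
  · exact (f0 _).trans (c0 m)
  · exact (f1 _).trans (c1 m)

lemma Sun.iso {V : Type*} {G : SimpleGraph V} {k : ℕ} {c x y : ℤ → V} (h : Sun G k c x y) :
    Nonempty (FG k ≃g G) := by
  obtain ⟨φ, hinj, φ0, φ1, φ2, φ3⟩ := exists_hom h.cyc h.offx h.offy h.adj_cx h.adj_xy
    (fun m t ht => ((h.x_nbr m t).1 ht).imp_right (fun ht => by rw [ht]; exact h.offy m))
    (fun m t ht => (h.y_nbr m t).1 ht)
  have key : ∀ a w, G.Adj (φ a) w → ∃ b, (FG k).Adj a b ∧ φ b = w := by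
    rintro ⟨i, t⟩ w hw
    have e1 : φ (i, 1) = c (2 * ZMod.cast i + 1) := by
      rw [← φ1, ZMod.intCast_zmod_cast]
    have e0 : φ (i, 0) = c (2 * ZMod.cast i) := by
      rw [← φ0, ZMod.intCast_zmod_cast]
    have ht : t = 0 ∨ t = 1 ∨ t = 2 ∨ t = 3 := by fin_cases t <;> simp
    rcases ht with rfl | rfl | rfl | rfl
    · rw [e0] at hw
      rcases h.even_nbr _ _ hw with rfl | rfl
      · exact ⟨(i, 1), by rw [FG_adj0]; simp, e1⟩
      · refine ⟨(i - 1, 1), by rw [FG_adj0]; simp, ?_⟩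
        rw [show 2 * (ZMod.cast i : ℤ) - 1 = 2 * (ZMod.cast i - 1) + 1 by ring, ← φ1]
        simp
    · rw [e1] at hw
      rcases (h.odd_nbr _ _).1 hw with rfl | rfl | rfl
      · refine ⟨(i + 1, 0), by rw [FG_adj1]; simp, ?_⟩
        rw [show 2 * (ZMod.cast i : ℤ) + 2 = 2 * (ZMod.cast i + 1) by ring, ← φ0]
        simp
      · exact ⟨(i, 0), by rw [FG_adj1]; simp, e0⟩
      · exact ⟨(i, 2), by rw [FG_adj1]; simp, φ2 i⟩
    · rw [φ2] at hw
      rcases (h.x_nbr _ _).1 hw with rfl | rfl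
      · exact ⟨(i, 1), by rw [FG_adj2]; simp, e1⟩
      · exact ⟨(i, 3), by rw [FG_adj2]; simp, φ3 i⟩
    · rw [φ3] at hw
      rw [(h.y_nbr _ _).1 hw]
      exact ⟨(i, 2), by rw [FG_adj3], φ2 i⟩
  have hsurj : Function.Surjective φ := by
    intro v
    have hsub := supp_subset (H := G) (v := φ (0, 0)) (S := Set.range φ) ⟨_, rfl⟩ (by
      rintro _ ⟨a, rfl⟩ b hab
      obtain ⟨b', -, hb⟩ := key a b hab
      exact ⟨b', hb⟩)
    apply hsub
    rw [ConnectedComponent.mem_supp_iff, ConnectedComponent.eq]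
    exact h.connected.preconnected _ _
  refine ⟨⟨Equiv.ofBijective φ ⟨hinj, hsurj⟩, ?_⟩⟩
  intro a b
  change G.Adj (φ a) (φ b) ↔ _
  constructor
  · intro hab
    obtain ⟨b', hb, he⟩ := key a _ hab
    rw [← hinj he]; exact hb
  · exact φ.map_adj

/-! ## The cycle of length eleven -/

lemma conf11 (i j : Fin 11) : Conf (cycleGraph 11) s(i, i + 1) s(j, j + 1) ↔
    ∃ s t : Fin 3, i + s.castLE (by norm_num) = j + t.castLE (by norm_num) := by
  have h1 : Conf (cycleGraph 11) s(i, i + 1) s(j, j + 1) ↔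
      ((i = j ∨ i - j = 1 ∨ j - i = 1) ∨ (i = j + 1 ∨ i - (j + 1) = 1 ∨ (j + 1) - i = 1)) ∨
      ((i + 1 = j ∨ i + 1 - j = 1 ∨ j - (i + 1) = 1) ∨
        (i + 1 = j + 1 ∨ i + 1 - (j + 1) = 1 ∨ (j + 1) - (i + 1) = 1)) := by
    unfold Conf
    simp only [Sym2.mem_iff, exists_eq_or_imp, exists_eq_left, cycleGraph_adj]
  rw [h1]
  clear h1
  revert i j
  decide

lemma edge11 {e : Sym2 (Fin 11)} (he : e ∈ (cycleGraph 11).edgeSet) : ∃ i, e = s(i, i + 1) := by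
  induction e with
  | _ a b =>
    rw [mem_edgeSet, cycleGraph_adj] at he
    rcases he with he | he
    · exact ⟨b, by rw [Sym2.eq_swap, ← he]; congr 2; abel⟩
    · exact ⟨a, by rw [← he]; congr 2; abel⟩

lemma wi_11 : WellIndumatched (cycleGraph 11) := by
  classical
  have key : ∀ M, IsMaximalInducedMatching (cycleGraph 11) M → M.ncard = 3 := by
    intro M hM
    rw [isMIM_iff, isIM_iff] at hM
    obtain ⟨⟨h1, h2⟩, h3⟩ := hM
    have hinj : Function.Injective (fun i : Fin 11 => s(i, i + 1)) := by decide
    let I : Finset (Fin 11) := Finset.univ.filter (fun i => s(i, i + 1) ∈ M)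
    have hI : ∀ i, i ∈ I ↔ s(i, i + 1) ∈ M := by intro i; simp [I]
    have hMI : M = (fun i : Fin 11 => s(i, i + 1)) '' (I : Set (Fin 11)) := by
      ext e
      constructor
      · intro he
        obtain ⟨i, rfl⟩ := edge11 (h1 he)
        exact ⟨i, (hI i).2 he, rfl⟩
      · rintro ⟨i, hi, rfl⟩
        exact (hI i).1 hi
    rw [hMI, Set.ncard_image_of_injective _ hinj, Set.ncard_coe_finset]
    have hle : Fintype.card (I × Fin 3) ≤ Fintype.card (Fin 11) := by
      apply Fintype.card_le_of_injective
        (fun p : I × Fin 3 => p.1.1 + p.2.castLE (by norm_num))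
      rintro ⟨⟨i, hi⟩, s⟩ ⟨⟨j, hj⟩, t⟩ hst
      have := hinj (h2 _ ((hI i).1 hi) _ ((hI j).1 hj) ((conf11 i j).2 ⟨s, t, hst⟩))
      subst this
      have := add_left_cancel hst
      simpa using this
    have hge : Fintype.card (Fin 11) ≤ Fintype.card (I × Fin 5) := by
      apply Fintype.card_le_of_surjective
        (fun p : I × Fin 5 => p.1.1 + p.2.castLE (by norm_num) - 2)
      intro i
      obtain ⟨f, hf, hc⟩ := h3 s(i, i + 1) (by
        rw [mem_edgeSet, cycleGraph_adj]; right; abel)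
      obtain ⟨j, rfl⟩ := edge11 (h1 hf)
      obtain ⟨s, t, hst⟩ := (conf11 i j).1 hc
      have h5 : ∀ s t : Fin 3, ∃ u : Fin 5, (u.castLE (by norm_num) : Fin 11)
          = t.castLE (by norm_num) - s.castLE (by norm_num) + 2 := by decide
      obtain ⟨u, hu⟩ := h5 s t
      refine ⟨(⟨j, (hI j).2 hf⟩, u), ?_⟩
      simp only [hu]
      rw [eq_sub_of_add_eq hst]
      abel
    simp only [Fintype.card_prod, Fintype.card_coe, Fintype.card_fin] at hle hge
    omega
  intro M N hM hN
  rw [key M hM, key N hN]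

/-- integer coordinates on the cycle of length eleven -/
def c11 (i : ℤ) : Fin 11 := ((i : ZMod 11) : ZMod 11)

lemma c11_succ (i : ℤ) : c11 (i + 1) = c11 i + 1 := Int.cast_add (R := ZMod 11) i 1 |>.trans (by
  rw [Int.cast_one]; rfl)

lemma c11_pred (i : ℤ) : c11 (i - 1) = c11 i - 1 := by
  have := c11_succ (i - 1)
  rw [sub_add_cancel] at this
  rw [this]; abel

lemma c11_cov (w : Fin 11) : ∃ j : ℤ, w = c11 j :=
  ⟨ZMod.cast (n := 11) w, (ZMod.intCast_zmod_cast (n := 11) w).symm⟩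

lemma cyc_11 : Cyc (cycleGraph 11) 11 c11 := by
  refine ⟨by norm_num, ?_, ?_, ?_⟩
  · intro i
    change (((i + 11 : ℤ) : ZMod 11)) = (i : ZMod 11)
    rw [ZMod.intCast_eq_intCast_iff_dvd_sub]
    simp
  · intro i j h h1 h2
    have h' : ((i : ZMod 11)) = (j : ZMod 11) := h
    rw [ZMod.intCast_eq_intCast_iff_dvd_sub] at h'
    have := Int.eq_zero_of_abs_lt_dvd h' (by rw [abs_lt]; constructor <;> push_cast <;> omega)
    omega
  · intro i
    rw [cycleGraph_adj, c11_succ]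
    right
    abel

lemma len_11 {v : Fin 11} {D : (cycleGraph 11).Walk v v} (hD : D.IsCycle) : D.length = 11 := by
  have hn : ∀ i j : ℤ, (cycleGraph 11).Adj (c11 i) (c11 j) →
      c11 j = c11 (i + 1) ∨ c11 j = c11 (i - 1) := by
    intro i j h
    rw [cycleGraph_adj] at h
    rw [c11_succ, c11_pred]
    rcases h with h | h
    · right; rw [← h]; abel
    · left; rw [← h]; abel
  obtain ⟨w, C, hC, hl⟩ := (cycleGraph_isContained_iff (G := cycleGraph 11) (n := 11)
    (by norm_num)).1 (IsContained.refl _)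
  refine (length_of_edges hC hD ?_).trans hl
  intro e
  rw [ring_edges cyc_11 hn hD (fun w _ => c11_cov w), ring_edges cyc_11 hn hC (fun w _ => c11_cov w)]

/-! ## Minimal graphs are of the two listed kinds -/

lemma Str.xx_all {V : Type*} [Finite V] {G : SimpleGraph V} {n : ℤ} {c : ℤ → V} (h : Str G n c)
    (hG : WellIndumatched G) {i : ℤ} (hi : XX G c i) (m : ℤ) : XX G c (i + 2 * m) := by
  have h9 := h.nine
  have hnat : ∀ (m : ℕ) (j : ℤ), XX G c j → XX G c (j + 2 * m) := by
    intro m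
    induction m with
    | zero => intro j hj; simpa using hj
    | succ m ih =>
      intro j hj
      have := h.xx_next2 hG _ (ih j hj)
      push_cast
      rwa [show j + 2 * ((m : ℤ) + 1) = j + 2 * m + 2 by ring]
  have hback : ∀ j, XX G c j → XX G c (j - 2) := by
    intro j hj
    have := hnat (n - 1).toNat j hj
    have e : j + 2 * (((n - 1).toNat : ℕ) : ℤ) = j - 2 + n + n := by omega
    rw [e, h.xx_per, h.xx_per] at this
    exact this
  have hneg : ∀ (m : ℕ), XX G c (i - 2 * m) := by
    intro m
    induction m with
    | zero => simpa using hi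
    | succ m ih =>
      have := hback _ ih
      push_cast
      rwa [show i - 2 * ((m : ℤ) + 1) = i - 2 * m - 2 by ring]
  rcases le_total 0 m with hm | hm
  · have := hnat m.toNat i hi
    rwa [show ((m.toNat : ℕ) : ℤ) = m by omega] at this
  · have := hneg (-m).toNat
    rwa [show i - 2 * (((-m).toNat : ℕ) : ℤ) = i + 2 * m by omega] at this

lemma forward {V : Type*} [Finite V] {G : SimpleGraph V} (hG : MinWI G) :
    Nonempty (G ≃g cycleGraph 11) ∨ RHS2 G := by
  have hac : ¬ G.IsAcyclic := by
    intro h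
    have := hG.2.1
    rw [girth_eq_zero.2 h] at this
    omega
  obtain ⟨v, C, hC, hl⟩ := exists_girth_eq_length.2 hac
  have h := str_of_min hG C hC hl
  by_cases h11 : C.length = 11
  · left
    obtain ⟨φ, hφ⟩ := (cycleGraph_isContained_iff (by norm_num)).2 ⟨v, C, hC, h11⟩
    obtain ⟨e, -⟩ := min_hom hG φ hφ wi_11 cyc_11.not_acyclic
    exact ⟨e.symm⟩
  right
  have hex : ∃ i, XX G (cz C) i := by
    by_contra hX
    push Not at hX
    have := h.no_xx hG.1 hX
    omega
  obtain ⟨i, hi⟩ := hex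
  have hall := fun m => h.xx_all hG.1 hi m
  have hev : Even C.length := by
    by_contra ho
    rw [Nat.not_even_iff_odd] at ho
    obtain ⟨q, hq⟩ := ho
    have := hall (q + 1)
    rw [show i + 2 * ((q : ℤ) + 1) = i + 1 + C.length by omega, h.xx_per] at this
    exact h.xx_next hG.1 i hi this
  obtain ⟨k, hk⟩ := hev
  have h9 := h.nine
  have hs := h.shift (i - 1)
  set c : ℤ → V := fun j => cz C (i - 1 + j) with hc
  have hodd : ∀ m, XX G c (2 * m + 1) := by
    intro m
    rw [hc, Str.XX_shift]
    rw [show i - 1 + (2 * m + 1) = i + 2 * m by ring]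
    exact hall m
  choose x y hx hcx hxy hyc using hodd
  have hcyc : Cyc G (2 * k) c := by
    have := hs.toCyc
    rwa [show (C.length : ℤ) = 2 * k by omega] at this
  obtain ⟨φ, hφ, φ0, φ1, -, -⟩ := exists_hom hcyc hx
    (fun m => (hs.leaf_y (hx m) (hcx m) (hxy m) (hyc m)).1) hcx hxy
    (fun m t ht => (hs.off _ _ _ (hx m) (hcx m) ht).imp_right And.left)
    (fun m => (hs.leaf_y (hx m) (hcx m) (hxy m) (hyc m)).2)
  have hk5 : 5 ≤ k := by omega
  have hF := sun_FG k hk5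
  obtain ⟨e, he⟩ := min_hom hG φ hφ (wi_FG k) hF.cyc.not_acyclic
  refine (Sun.map e hF).rhs C hC (by omega) hl (1 - i) ?_
  intro j
  have hcj : ∀ j, e (cf k j) = c j := by
    intro j
    rcases Int.even_or_odd' j with ⟨m, rfl | rfl⟩
    · rw [cf_even, he, φ0]
    · rw [cf_odd, he, φ1]
  rw [hcj, hc]
  simp only
  congr 1
  ring

/-! ## The listed graphs are suns -/

lemma sun_of {V : Type*} {G : SimpleGraph V} {k : ℕ} {c : ℤ → V} (h : Cyc G (2 * k) c)
    (hk : 5 ≤ k) (hg : G.girth = 2 * k) (hconn : G.Connected) {S : Set (Sym2 V)}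
    (hS : ∀ e, e ∈ S ↔ ∃ i, e = s(c i, c (i + 1)))
    (hI : ∀ m, TypeI (G.deleteEdges S) (c (2 * m)))
    (hII : ∀ m, TypeII (G.deleteEdges S) (c (2 * m + 1))) : ∃ x y, Sun G k c x y := by
  set H := G.deleteEdges S with hH
  have hadj : ∀ a b, H.Adj a b ↔ G.Adj a b ∧ s(a, b) ∉ S := by
    intro a b; rw [hH, deleteEdges_adj]
  have hSc : ∀ j w, s(c j, w) ∈ S → w = c (j + 1) ∨ w = c (j - 1) := by
    intro j w hw
    obtain ⟨i, hi⟩ := (hS _).1 hw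
    rw [Sym2.eq_iff] at hi
    rcases hi with ⟨h1, h2⟩ | ⟨h1, h2⟩
    · left
      rw [h2, h.eq_iff]
      rw [h.eq_iff] at h1
      obtain ⟨d, hd⟩ := h1
      exact ⟨-d, by linarith⟩
    · right
      rw [h2, h.eq_iff]
      rw [h.eq_iff] at h1
      obtain ⟨d, hd⟩ := h1
      exact ⟨-d, by linarith⟩
  have hSo : ∀ a b, Off c a → s(a, b) ∉ S := by
    intro a b ha hab
    obtain ⟨i, hi⟩ := (hS _).1 hab
    rw [Sym2.eq_iff] at hi
    rcases hi with ⟨h1, -⟩ | ⟨h1, -⟩ <;> exact ha _ h1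
  have hself : ∀ v, v ∈ (H.connectedComponentMk v).supp := fun v =>
    ConnectedComponent.mem_supp_iff _ _ |>.2 rfl
  have hsupp : ∀ v w, H.Adj v w → w ∈ (H.connectedComponentMk v).supp := fun v w hvw =>
    mem_supp_of_adj (hself v) hvw
  choose x y hxy hcx hcy hsup acx axy ncy using hII
  have notI : ∀ m v w, H.Adj v w → v ≠ c (2 * m) := by
    rintro m v w hvw rfl
    have := hsupp _ _ hvw
    rw [hI m] at this
    exact hvw.ne this.symm
  have offx : ∀ m, Off c (x m) := by
    intro m j hj
    rcases Int.even_or_odd' j with ⟨q, rfl | rfl⟩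
    · exact notI q _ _ (axy m) hj
    · have hs : (H.connectedComponentMk (c (2 * q + 1))).supp = {c (2 * m + 1), x m, y m} := by
        rw [← hsup m, ← hj, ConnectedComponent.connectedComponentMk_eq_of_adj (acx m)]
      have hyq : y q ∈ (H.connectedComponentMk (c (2 * q + 1))).supp := by
        rw [hsup q]; simp
      have hn := ncy q
      have hne := hcy q
      rw [hs] at hyq
      rw [← hj] at hn hne
      rcases hyq with h1 | h1 | h1
      · rw [h1] at hn; exact hn (acx m).symm
      · exact hne h1.symm
      · rw [h1] at hn; exact hn (axy m)
  have offy : ∀ m, Off c (y m) := by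
    intro m j hj
    obtain ⟨p, hp, hl, hm, -⟩ := h.ear (offx m) ((hadj _ _).1 (acx m)).1.symm j
    have hxj : G.Adj (x m) (c j) := by rw [← hj]; exact ((hadj _ _).1 (axy m)).1
    have hq : (hxj.toWalk).IsPath := by
      rw [Walk.isPath_def]
      simp [hxj.ne]
    have := two_paths hp hq hm (by
      simp only [Walk.support_cons, Walk.support_nil, List.mem_cons, List.not_mem_nil, or_false,
        Adj.toWalk]
      rintro (h1 | h1)
      · exact hcx m h1
      · rw [← hj] at h1; exact hcy m h1)
    rw [hg] at this
    simp only [Adj.toWalk, Walk.length_cons, Walk.length_nil] at this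
    omega
  have even_nbr : ∀ m w, G.Adj (c (2 * m)) w → w = c (2 * m + 1) ∨ w = c (2 * m - 1) := by
    intro m w hw
    by_cases hs : s(c (2 * m), w) ∈ S
    · exact hSc _ _ hs
    · exact absurd rfl (notI m _ _ ((hadj _ _).2 ⟨hw, hs⟩))
  have odd_nbr : ∀ m w, G.Adj (c (2 * m + 1)) w ↔ w = c (2 * m + 2) ∨ w = c (2 * m) ∨ w = x m := by
    intro m w
    have e2 : 2 * m + 2 = 2 * m + 1 + 1 := by ring
    constructor
    · intro hw
      by_cases hs : s(c (2 * m + 1), w) ∈ S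
      · rcases hSc _ _ hs with h1 | h1
        · left; rw [h1, e2]
        · right; left; rw [h1]; congr 1; ring
      · have hw' := (hadj _ _).2 ⟨hw, hs⟩
        have := hsupp _ _ hw'
        rw [hsup m] at this
        rcases this with h1 | h1 | h1
        · exact absurd h1.symm hw.ne
        · exact Or.inr (Or.inr h1)
        · rw [h1] at hw'; exact absurd hw' (ncy m)
    · rintro (rfl | rfl | rfl)
      · rw [e2]; exact h.adj _
      · exact (h.adj _).symm
      · exact ((hadj _ _).1 (acx m)).1
  have x_nbr : ∀ m w, G.Adj (x m) w ↔ w = c (2 * m + 1) ∨ w = y m := by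
    intro m w
    constructor
    · intro hw
      have hw' := (hadj _ _).2 ⟨hw, hSo _ w (offx m)⟩
      have := mem_supp_of_adj (hsupp _ _ (acx m)) hw'
      rw [hsup m] at this
      rcases this with h1 | h1 | h1
      · exact Or.inl h1
      · exact absurd h1.symm hw.ne
      · exact Or.inr h1
    · rintro (rfl | rfl)
      · exact ((hadj _ _).1 (acx m)).1.symm
      · exact ((hadj _ _).1 (axy m)).1
  have y_nbr : ∀ m w, G.Adj (y m) w ↔ w = x m := by
    intro m w
    constructor
    · intro hw
      have hw' := (hadj _ _).2 ⟨hw, hSo _ w (offy m)⟩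
      have := mem_supp_of_adj (mem_supp_of_adj (hsupp _ _ (acx m)) (axy m)) hw'
      rw [hsup m] at this
      rcases this with h1 | h1 | h1
      · rw [h1] at hw'; exact absurd hw'.symm (ncy m)
      · exact h1
      · exact absurd h1.symm hw.ne
    · rintro rfl
      exact ((hadj _ _).1 (axy m)).1.symm
  refine ⟨x, y, h, hk, even_nbr, odd_nbr, x_nbr, y_nbr, offx, offy, ?_⟩
  intro v
  have := supp_subset (H := G) (v := c (2 * 0)) (S := {v | (∃ m, v = c (2 * m)) ∨
    (∃ m, v = c (2 * m + 1)) ∨ (∃ m, v = x m) ∨ ∃ m, v = y m}) (Or.inl ⟨0, rfl⟩) (by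
      rintro a (⟨m, rfl⟩ | ⟨m, rfl⟩ | ⟨m, rfl⟩ | ⟨m, rfl⟩) b hab
      · rcases even_nbr _ _ hab with rfl | rfl
        · exact Or.inr (Or.inl ⟨m, rfl⟩)
        · exact Or.inr (Or.inl ⟨m - 1, by congr 1; ring⟩)
      · rcases (odd_nbr _ _).1 hab with rfl | rfl | rfl
        · exact Or.inl ⟨m + 1, by congr 1; ring⟩
        · exact Or.inl ⟨m, rfl⟩
        · exact Or.inr (Or.inr (Or.inl ⟨m, rfl⟩))
      · rcases (x_nbr _ _).1 hab with rfl | rfl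
        · exact Or.inr (Or.inl ⟨m, rfl⟩)
        · exact Or.inr (Or.inr (Or.inr ⟨m, rfl⟩))
      · rw [(y_nbr _ _).1 hab]
        exact Or.inr (Or.inr (Or.inl ⟨m, rfl⟩)))
  apply this
  rw [ConnectedComponent.mem_supp_iff, ConnectedComponent.eq]
  exact hconn.preconnected _ _

lemma edges_cz {V : Type*} {G : SimpleGraph V} {v : V} (C : G.Walk v v) (hC : C.IsCycle)
    (e : Sym2 V) : e ∈ C.edges ↔ ∃ i, e = s(cz C i, cz C (i + 1)) := by
  have h := cz_cyc C hC
  have hnat : ∀ i : ℕ, i < C.length → s(cz C i, cz C ((i : ℤ) + 1)) ∈ C.edges := by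
    intro i hi
    have h2 := cz_nat C (i := i + 1) (by omega)
    push_cast at h2
    rw [cz_nat C hi.le, h2, ← Walk.adj_toSubgraph_iff_mem_edges]
    exact Walk.toSubgraph_adj_getVert C hi
  constructor
  · intro he
    induction e with
    | _ a b =>
      rw [← Walk.adj_toSubgraph_iff_mem_edges, Walk.toSubgraph_adj_iff] at he
      obtain ⟨i, hi, hlt⟩ := he
      refine ⟨i, ?_⟩
      have h2 := cz_nat C (i := i + 1) (by omega)
      push_cast at h2
      rw [cz_nat C hlt.le, h2]
      first | exact hi | exact hi.symm
  · rintro ⟨i, rfl⟩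
    obtain ⟨j, h0, h1, h2, h3⟩ := h.rep 0 i
    have h4 : cz C (j + 1) = cz C (i + 1) := by
      rw [h.eq_iff]
      obtain ⟨d, hd⟩ := h3
      exact ⟨-d, by linarith⟩
    rw [← h2, ← h4]
    have := hnat j.toNat (by omega)
    rwa [show ((j.toNat : ℕ) : ℤ) = j by omega] at this

lemma typeI_not_typeII {V : Type*} {H : SimpleGraph V} {v : V} (h1 : TypeI H v)
    (h2 : TypeII H v) : False := by
  obtain ⟨x, y, -, hvx, -, hs, -, -⟩ := h2
  rw [h1] at hs
  have : x ∈ ({v} : Set V) := by rw [hs]; simp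
  exact hvx this.symm

lemma sun_of_rhs {V : Type*} {G : SimpleGraph V} (h : RHS2 G) :
    ∃ k c x y, Sun G k c x y ∧ G.girth = 2 * k ∧
      ∀ (w : V) (D : G.Walk w w), D.IsCycle → D.length = 2 * k := by
  obtain ⟨-, hconn, g, hg10, ⟨k, hk⟩, hgirth, v, C, hC, hl, huniq, hT⟩ := h
  set H := G.deleteEdges {e | e ∈ C.edges} with hH
  have h := cz_cyc C hC
  have hT' : ∀ j : ℤ, (TypeI H (cz C j) ∧ TypeII H (cz C (j + 1))) ∨
      (TypeII H (cz C j) ∧ TypeI H (cz C (j + 1))) := by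
    intro i
    obtain ⟨j, h0, h1, h2, h3⟩ := h.rep 0 i
    have h4 : cz C (j + 1) = cz C (i + 1) := by
      rw [h.eq_iff]
      obtain ⟨d, hd⟩ := h3
      exact ⟨-d, by linarith⟩
    rw [← h2, ← h4]
    have := hT j.toNat (by omega)
    have e2 := cz_nat C (i := j.toNat + 1) (by omega)
    rw [← cz_nat C (i := j.toNat) (by omega), ← e2] at this
    push_cast at this
    rwa [show ((j.toNat : ℕ) : ℤ) = j by omega] at this
  have h2 : ∀ j, TypeI H (cz C (j + 2)) ↔ TypeI H (cz C j) := by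
    intro j
    have a := hT' j
    have b := hT' (j + 1)
    rw [show j + 1 + 1 = j + 2 by ring] at b
    have n0 := @typeI_not_typeII _ H (cz C j)
    have n1 := @typeI_not_typeII _ H (cz C (j + 1))
    have n2 := @typeI_not_typeII _ H (cz C (j + 2))
    tauto
  have h2m : ∀ j m, TypeI H (cz C (j + 2 * m)) ↔ TypeI H (cz C j) := by
    intro j m
    induction m using Int.induction_on with
    | zero => simp
    | succ m ih => rw [← ih, mul_add, mul_one, ← add_assoc, h2]
    | pred m ih => rw [← ih, ← h2]; ring_nf
  obtain ⟨s, hs⟩ : ∃ s, TypeI H (cz C s) := by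
    rcases hT' 0 with h | h
    · exact ⟨_, h.1⟩
    · exact ⟨_, h.2⟩
  have hI : ∀ m, TypeI H (cz C (s + 2 * m)) := fun m => (h2m s m).2 hs
  have hII : ∀ m, TypeII H (cz C (s + (2 * m + 1))) := by
    intro m
    rw [← add_assoc]
    rcases hT' (s + 2 * m) with h | h
    · exact h.2
    · exact (typeI_not_typeII (hI m) h.1).elim
  have hcyc : Cyc G (2 * k) (fun j => cz C (s + j)) := by
    have hn : (C.length : ℤ) = 2 * k := by omega
    rw [hn] at h
    refine ⟨h.three, fun j => ?_, fun i j hij h1 h2 => ?_, fun i => ?_⟩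
    · have := h.per (s + j)
      rwa [add_assoc] at this
    · have := h.inj _ _ hij (by omega) (by omega)
      omega
    · have := h.adj (s + i)
      rwa [add_assoc] at this
  obtain ⟨x, y, hx⟩ := sun_of hcyc (by omega) (by omega) hconn (S := {e | e ∈ C.edges}) (by
    intro e
    change e ∈ C.edges ↔ _
    rw [edges_cz C hC]
    constructor
    · rintro ⟨i, rfl⟩
      refine ⟨i - s, ?_⟩
      rw [show s + (i - s) = i by ring, show s + (i - s + 1) = i + 1 by ring]
    · rintro ⟨i, rfl⟩
      exact ⟨s + i, by rw [add_assoc]⟩) hI hII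
  refine ⟨k, _, x, y, hx, by omega, fun w D hD => ?_⟩
  have := length_of_edges hC hD (huniq w D hD)
  omega

/-! ## Minimality -/

lemma sub_top {V : Type*} [Finite V] {G : SimpleGraph V} {H : G.Subgraph} (e : H.coe ≃g G) :
    H = ⊤ := by
  have hv : H.verts = Set.univ := by
    apply Set.eq_of_subset_of_ncard_le (Set.subset_univ _)
    rw [Set.ncard_univ, ← Nat.card_coe_set_eq, Nat.card_congr e.toEquiv]
  let f : G →g G := H.hom.comp e.symm.toHom
  have hf : Function.Injective f := Subtype.val_injective.comp e.symm.injective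
  have hsurj := Finite.injective_iff_surjective.1 (Hom.mapEdgeSet.injective f hf)
  apply Subgraph.ext hv
  ext a b
  constructor
  · exact fun h => h.adj_sub
  · intro hab
    obtain ⟨⟨e', he'⟩, hE⟩ := hsurj ⟨s(a, b), hab⟩
    have hE := congrArg Subtype.val hE
    induction e' with
    | _ p q =>
      have hpq : H.Adj (e.symm p).1 (e.symm q).1 := e.symm.map_adj_iff.2 he'
      change s(((e.symm p).1 : V), (e.symm q).1) = s(a, b) at hE
      rw [Sym2.eq_iff] at hE
      rcases hE with ⟨h1, h2⟩ | ⟨h1, h2⟩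
      · rwa [h1, h2] at hpq
      · rw [h1, h2] at hpq; exact hpq.symm

lemma min_of {V : Type*} [Finite V] {G : SimpleGraph V} (hWI : WellIndumatched G)
    (hg : 9 ≤ G.girth) (hc : ∀ H : G.Subgraph, MinWI H.coe → Nonempty (H.coe ≃g G)) : MinWI G := by
  refine ⟨hWI, hg, ?_⟩
  intro H hH hP
  apply hH
  obtain ⟨H0, hle, hmin⟩ := exists_minimal_le_of_wellFoundedLT
    (fun K : G.Subgraph => WellIndumatched K.coe ∧ 9 ≤ K.coe.girth) H hP
  have hM : MinWI H0.coe := by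
    refine ⟨hmin.prop.1, hmin.prop.2, ?_⟩
    rintro K hK ⟨h1, h2⟩
    apply hK
    obtain ⟨i⟩ := map_iso H0.hom H0.hom_injective K
    have hKle : K.map H0.hom ≤ H0 := by
      have := Subgraph.coeSubgraph_le K
      exact this
    have h3 := hmin.le_of_le ⟨wi_of_iso i.symm h1, by rw [← i.girth_eq]; exact h2⟩ hKle
    have h4 : K.map H0.hom = H0 := le_antisymm hKle h3
    apply sub_top (e := ?_)
    exact i.trans (by rw [h4])
  obtain ⟨e⟩ := hc H0 hM
  have := sub_top e
  rw [this] at hle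
  exact top_le_iff.1 hle

lemma exists_cycle {V : Type*} {G : SimpleGraph V} (h : ¬ G.IsAcyclic) :
    ∃ (v : V) (C : G.Walk v v), C.IsCycle := by
  obtain ⟨v, C, hC, -⟩ := exists_girth_eq_length.2 h
  exact ⟨v, C, hC⟩

lemma hom_len {V W : Type*} {F : SimpleGraph W} {G : SimpleGraph V} (φ : F →g G)
    (hφ : Function.Injective φ) {L : ℕ}
    (hG : ∀ (v : V) (D : G.Walk v v), D.IsCycle → D.length = L) {w : W} {C : F.Walk w w}
    (hC : C.IsCycle) : C.length = L := by
  have := hG _ (C.map φ) (hC.map hφ)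
  simpa using this

lemma backward {V : Type*} [Finite V] {G : SimpleGraph V}
    (h : Nonempty (G ≃g cycleGraph 11) ∨ RHS2 G) : MinWI G := by
  obtain ⟨w11, C11, hC11, hl11⟩ := (cycleGraph_isContained_iff (G := cycleGraph 11) (n := 11)
    (by norm_num)).1 (IsContained.refl _)
  rcases h with ⟨⟨e⟩⟩ | h
  · have hlen : ∀ (v : V) (D : G.Walk v v), D.IsCycle → D.length = 11 := fun v D hD =>
      hom_len e.toHom e.injective (fun _ _ h => len_11 h) hD
    have hac : ¬ G.IsAcyclic := by
      intro h
      exact h _ (hC11.map (f := e.symm.toHom) e.symm.injective)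
    refine min_of (wi_of_iso e wi_11) ?_ ?_
    · obtain ⟨v, C, hC, hl⟩ := exists_girth_eq_length.2 hac
      rw [hl, hlen v C hC]; norm_num
    · intro H hH
      rcases forward hH with ⟨⟨e'⟩⟩ | h'
      · exact ⟨e'.trans e.symm⟩
      · exfalso
        obtain ⟨k, c, x, y, hs, hg, hl⟩ := sun_of_rhs h'
        obtain ⟨v, C, hC⟩ := exists_cycle hs.cyc.not_acyclic
        have h1 := hl v C hC
        have h2 := hom_len H.hom H.hom_injective hlen hC
        omega
  · obtain ⟨k, c, x, y, hs, hg, hlen⟩ := sun_of_rhs h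
    have h5 := hs.five
    obtain ⟨i⟩ := hs.iso
    have : Finite (ZMod k × Fin 4) := Finite.of_injective i i.injective
    refine min_of (wi_of_iso i.symm (wi_FG k)) (by omega) ?_
    intro H hH
    rcases forward hH with ⟨⟨e'⟩⟩ | h'
    · exfalso
      have h1 := hom_len (H.hom.comp e'.symm.toHom)
        (H.hom_injective.comp e'.symm.injective) hlen hC11
      omega
    · obtain ⟨k', c', x', y', hs', hg', hl'⟩ := sun_of_rhs h'
      obtain ⟨v, C, hC⟩ := exists_cycle hs'.cyc.not_acyclic
      have h1 := hl' v C hC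
      have h2 := hom_len H.hom H.hom_injective hlen hC
      have : k' = k := by omega
      subst this
      obtain ⟨i'⟩ := hs'.iso
      exact ⟨i'.symm.trans i⟩

/-- Characterization of minimal well-indumatched graphs of girth at least `9`:
`G` is well-indumatched of girth at least `9` with no proper subgraph that is
well-indumatched of girth at least `9`, if and only if either `G` is the cycle `C₁₁`,
or `G` is a reduced unicyclic graph of even girth `g ≥ 10` whose unique cycle
`C = v₁ ⋯ v_g v₁` has its rooted trees `T_{v_i}` alternately of Type (i) and
Type (ii) around the cycle. -/
theorem stmt_15 {V : Type*} [Fintype V] (G : SimpleGraph V) :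
    (WellIndumatched G ∧ 9 ≤ G.girth ∧
      ∀ H : G.Subgraph, H ≠ ⊤ → ¬ (WellIndumatched H.coe ∧ 9 ≤ H.coe.girth)) ↔
    (Nonempty (G ≃g SimpleGraph.cycleGraph 11) ∨
      (Reduced G ∧ G.Connected ∧
        ∃ g : ℕ, 10 ≤ g ∧ Even g ∧ G.girth = g ∧
          ∃ (v : V) (C : G.Walk v v), C.IsCycle ∧ C.length = g ∧
            (∀ (w : V) (D : G.Walk w w), D.IsCycle → ∀ e, e ∈ D.edges ↔ e ∈ C.edges) ∧
            ∀ i < g,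
              (TypeI (G.deleteEdges {e | e ∈ C.edges}) (C.getVert i) ∧
                TypeII (G.deleteEdges {e | e ∈ C.edges}) (C.getVert (i + 1))) ∨
              (TypeII (G.deleteEdges {e | e ∈ C.edges}) (C.getVert i) ∧
                TypeI (G.deleteEdges {e | e ∈ C.edges}) (C.getVert (i + 1))))) := by
  change MinWI G ↔ (Nonempty (G ≃g SimpleGraph.cycleGraph 11) ∨ RHS2 G)
  exact ⟨forward, backward⟩
end
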